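/- arXiv:2105.12199 — 2 statements merged into one kernel-verified Lean document; each statement's English description precedes it below -/
import Mathlib

section
/- Let A be a *-algebra. The Lebesgue decomposition of representable positive functionals over A is unique if and only if every topologically irreducible *-representation of A on a Hilbert space is finite dimensional (i.e. its Hilbert space is finite dimensional). -/
open scoped ComplexOrder InnerProductSpace

section StarAlgebraDefs

variable {A : Type} [NonUnitalRing A] [Module ℂ A] [SMulCommClass ℂ A A]
  [IsScalarTower ℂ A A] [StarRing A] [StarModule ℂ A]

/-- A linear functional on a `⋆`-algebra is positive if `0 ≤ f (a⋆ * a)` for every `a`. -/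
def IsPosFn (f : A →ₗ[ℂ] ℂ) : Prop := ∀ a : A, 0 ≤ f (star a * a)

/-- Order on positive functionals: `f ≤ g` iff `g - f` is positive. -/
def FnLE (f g : A →ₗ[ℂ] ℂ) : Prop := IsPosFn (g - f)

/-- `f` is induced by a `⋆`-representation on the Hilbert space `H` with a cyclic vector. -/
def IsRepOn (f : A →ₗ[ℂ] ℂ) (H : Type) [NormedAddCommGroup H]
    [InnerProductSpace ℂ H] [CompleteSpace H] : Prop :=
  ∃ (π : A →⋆ₙₐ[ℂ] (H →L[ℂ] H)) (ξ : H),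
    DenseRange (fun a : A => π a ξ) ∧ ∀ a : A, f a = ⟪ξ, π a ξ⟫_ℂ

/-- A positive linear functional is representable if it is induced by a cyclic
`⋆`-representation on some complex Hilbert space. -/
def IsRepresentable (f : A →ₗ[ℂ] ℂ) : Prop :=
  ∃ (H : Type) (_ : NormedAddCommGroup H) (_ : InnerProductSpace ℂ H) (_ : CompleteSpace H),
    IsRepOn f H

/-- Absolute continuity `f ≪ g` for representable positive functionals: `f` is the pointwise
limit of an increasing sequence of representable positive functionals `fₙ` with
`fₙ ≤ αₙ • g` for some positive reals `αₙ`. -/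
def AbsContR (f g : A →ₗ[ℂ] ℂ) : Prop :=
  ∃ (fn : ℕ → (A →ₗ[ℂ] ℂ)) (α : ℕ → ℝ),
    (∀ n, IsRepresentable (fn n) ∧ IsPosFn (fn n)) ∧
    (∀ n, 0 < α n) ∧
    (∀ n, FnLE (fn n) (fn (n + 1))) ∧
    (∀ n, FnLE (fn n) (((α n : ℂ)) • g)) ∧
    (∀ a : A, Filter.Tendsto (fun n => fn n a) Filter.atTop (nhds (f a)))

/-- Singularity `f ⊥ g` for representable positive functionals: the only representable
positive functional dominated by both `f` and `g` is `0`. -/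
def SingularR (f g : A →ₗ[ℂ] ℂ) : Prop :=
  ∀ p : A →ₗ[ℂ] ℂ, IsRepresentable p → IsPosFn p → FnLE p f → FnLE p g → p = 0

/-- `f = fr + fs` is a Lebesgue decomposition of `f` with respect to `g` (representable
positive functionals). -/
def IsLebDecompR (f g fr fs : A →ₗ[ℂ] ℂ) : Prop :=
  IsRepresentable fr ∧ IsPosFn fr ∧ IsRepresentable fs ∧ IsPosFn fs ∧
    f = fr + fs ∧ AbsContR fr g ∧ SingularR fs g

/-- The Lebesgue decomposition of `f` with respect to `g` is unique. -/
def LebDecompUniqueForR (f g : A →ₗ[ℂ] ℂ) : Prop :=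
  ∀ fr fs fr' fs' : A →ₗ[ℂ] ℂ, IsLebDecompR f g fr fs → IsLebDecompR f g fr' fs' →
    fr = fr' ∧ fs = fs'

end StarAlgebraDefs

/-- The Lebesgue decomposition of representable positive functionals over `A` is unique. -/
def LebDecompUniqueR (A : Type) [NonUnitalRing A] [Module ℂ A] [SMulCommClass ℂ A A]
    [IsScalarTower ℂ A A] [StarRing A] [StarModule ℂ A] : Prop :=
  ∀ f g : A →ₗ[ℂ] ℂ, IsRepresentable f → IsPosFn f → IsRepresentable g → IsPosFn g →
    LebDecompUniqueForR f g

/-- A `⋆`-representation `π` of `A` on a complex Hilbert space `H` is topologically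
irreducible if `H ≠ {0}` and the only closed `π`-invariant subspaces of `H` are `{0}`
and `H`. -/
def IsTopIrredRep {A : Type} [NonUnitalRing A] [Module ℂ A] [StarRing A]
    {H : Type} [NormedAddCommGroup H] [InnerProductSpace ℂ H] [CompleteSpace H]
    (π : A →⋆ₙₐ[ℂ] (H →L[ℂ] H)) : Prop :=
  Nontrivial H ∧
    ∀ S : Submodule ℂ H, IsClosed (S : Set H) →
      (∀ a : A, ∀ x ∈ S, π a x ∈ S) → S = ⊥ ∨ S = ⊤

open scoped ComplexOrder InnerProductSpace
set_option linter.unusedSectionVars false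
section Basics

variable {A : Type} [NonUnitalRing A] [Module ℂ A] [SMulCommClass ℂ A A]
  [IsScalarTower ℂ A A] [StarRing A] [StarModule ℂ A]
variable {H : Type} [NormedAddCommGroup H] [InnerProductSpace ℂ H] [CompleteSpace H]
variable {K : Type} [NormedAddCommGroup K] [InnerProductSpace ℂ K] [CompleteSpace K]

/-- The star-representation moves across the inner product. -/
theorem rep_inner_left (π : A →⋆ₙₐ[ℂ] (H →L[ℂ] H)) (a : A) (x y : H) :
    ⟪π a x, y⟫_ℂ = ⟪x, π (star a) y⟫_ℂ := by
  rw [map_star, ContinuousLinearMap.star_eq_adjoint, ContinuousLinearMap.adjoint_inner_right]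

theorem rep_inner_right (π : A →⋆ₙₐ[ℂ] (H →L[ℂ] H)) (a : A) (x y : H) :
    ⟪x, π a y⟫_ℂ = ⟪π (star a) x, y⟫_ℂ := by
  rw [rep_inner_left, star_star]

theorem rep_mul_apply (π : A →⋆ₙₐ[ℂ] (H →L[ℂ] H)) (a b : A) (x : H) :
    π (a * b) x = π a (π b x) := by
  rw [map_mul]; rfl

/-- Orbit map. -/
noncomputable def orb (π : A →⋆ₙₐ[ℂ] (H →L[ℂ] H)) (v : H) : A →ₗ[ℂ] H where
  toFun a := π a v
  map_add' a b := by simp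
  map_smul' c a := by simp

@[simp] theorem orb_apply (π : A →⋆ₙₐ[ℂ] (H →L[ℂ] H)) (v : H) (a : A) : orb π v a = π a v := rfl

/-- Vector functional. -/
noncomputable def vecFn (π : A →⋆ₙₐ[ℂ] (H →L[ℂ] H)) (v : H) : A →ₗ[ℂ] ℂ where
  toFun a := ⟪v, π a v⟫_ℂ
  map_add' a b := by simp
  map_smul' c a := by simp

theorem vecFn_apply (π : A →⋆ₙₐ[ℂ] (H →L[ℂ] H)) (v : H) (a : A) :
    vecFn π v a = ⟪v, π a v⟫_ℂ := rfl

theorem vecFn_star_mul (π : A →⋆ₙₐ[ℂ] (H →L[ℂ] H)) (v : H) (b a : A) :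
    vecFn π v (star b * a) = ⟪π b v, π a v⟫_ℂ := by
  rw [vecFn_apply, rep_mul_apply, rep_inner_left]

theorem vecFn_star_mul_self (π : A →⋆ₙₐ[ℂ] (H →L[ℂ] H)) (v : H) (a : A) :
    vecFn π v (star a * a) = ((‖π a v‖ ^ 2 : ℝ) : ℂ) := by
  rw [vecFn_star_mul, inner_self_eq_norm_sq_to_K]; simp

theorem vecFn_pos (π : A →⋆ₙₐ[ℂ] (H →L[ℂ] H)) (v : H) : IsPosFn (vecFn π v) := by
  intro a
  rw [vecFn_star_mul_self]
  exact_mod_cast sq_nonneg (‖π a v‖)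

theorem fnLE_vecFn_iff (π : A →⋆ₙₐ[ℂ] (H →L[ℂ] H)) (v : H) (σ : A →⋆ₙₐ[ℂ] (K →L[ℂ] K)) (u : K)
    (c : ℝ) : FnLE (vecFn σ u) ((c : ℂ) • vecFn π v) ↔ ∀ a, ‖σ a u‖ ^ 2 ≤ c * ‖π a v‖ ^ 2 := by
  unfold FnLE IsPosFn
  refine forall_congr' fun a => ?_
  rw [LinearMap.sub_apply, LinearMap.smul_apply, vecFn_star_mul_self, vecFn_star_mul_self,
    smul_eq_mul, ← Complex.ofReal_mul, ← Complex.ofReal_sub, Complex.zero_le_real, sub_nonneg]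

theorem fnLE_vecFn_iff' (π : A →⋆ₙₐ[ℂ] (H →L[ℂ] H)) (v : H) (σ : A →⋆ₙₐ[ℂ] (K →L[ℂ] K)) (u : K) :
    FnLE (vecFn σ u) (vecFn π v) ↔ ∀ a, ‖σ a u‖ ^ 2 ≤ ‖π a v‖ ^ 2 := by
  simpa using fnLE_vecFn_iff π v σ u 1

theorem FnLE.trans' {f g h : A →ₗ[ℂ] ℂ} (h1 : FnLE f g) (h2 : FnLE g h) : FnLE f h := by
  intro a
  have := add_nonneg (h1 a) (h2 a)
  simpa using this

/-- Closed cyclic subspace. -/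
noncomputable def cyc (π : A →⋆ₙₐ[ℂ] (H →L[ℂ] H)) (v : H) : Submodule ℂ H :=
  (LinearMap.range (orb π v)).topologicalClosure

theorem cyc_closed (π : A →⋆ₙₐ[ℂ] (H →L[ℂ] H)) (v : H) : IsClosed (cyc π v : Set H) :=
  Submodule.isClosed_topologicalClosure _

instance cyc_complete (π : A →⋆ₙₐ[ℂ] (H →L[ℂ] H)) (v : H) : CompleteSpace (cyc π v) :=
  (cyc_closed π v).completeSpace_coe

theorem mem_cyc (π : A →⋆ₙₐ[ℂ] (H →L[ℂ] H)) (v : H) (a : A) : π a v ∈ cyc π v :=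
  Submodule.le_topologicalClosure _ ⟨a, rfl⟩

theorem cyc_le (π : A →⋆ₙₐ[ℂ] (H →L[ℂ] H)) (v : H) (S : Submodule ℂ H)
    (hS : IsClosed (S : Set H)) (h : ∀ a, π a v ∈ S) : cyc π v ≤ S := by
  apply Submodule.topologicalClosure_minimal _ _ hS
  rintro _ ⟨a, rfl⟩
  exact h a

theorem exists_approx_of_mem_cyc (π : A →⋆ₙₐ[ℂ] (H →L[ℂ] H)) (v x : H) (hx : x ∈ cyc π v)
    (ε : ℝ) (hε : 0 < ε) : ∃ a, ‖π a v - x‖ < ε := by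
  have : x ∈ closure (LinearMap.range (orb π v) : Set H) := hx
  rw [Metric.mem_closure_iff] at this
  obtain ⟨_, ⟨a, rfl⟩, h⟩ := this ε hε
  refine ⟨a, ?_⟩
  rw [dist_comm, dist_eq_norm] at h
  exact h

theorem cyc_invt (π : A →⋆ₙₐ[ℂ] (H →L[ℂ] H)) (v : H) (a : A) (x : H) (hx : x ∈ cyc π v) :
    π a x ∈ cyc π v := by
  have : cyc π v ≤ (cyc π v).comap (π a).toLinearMap := by
    apply cyc_le
    · exact (cyc_closed π v).preimage (π a).continuous
    · intro b
      change π a (π b v) ∈ cyc π v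
      rw [← rep_mul_apply]
      exact mem_cyc _ _ _
  exact this hx

theorem denseRange_iff_cyc (π : A →⋆ₙₐ[ℂ] (H →L[ℂ] H)) (v : H) :
    DenseRange (fun a : A => π a v) ↔ cyc π v = ⊤ := by
  unfold cyc
  rw [← Submodule.dense_iff_topologicalClosure_eq_top]
  rfl

/-- Projections on closed invariant subspaces commute with the representation. -/
theorem proj_comm (π : A →⋆ₙₐ[ℂ] (H →L[ℂ] H)) (S : Submodule ℂ H) [S.HasOrthogonalProjection]
    (h : ∀ a : A, ∀ x ∈ S, π a x ∈ S) (a : A) (x : H) :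
    S.starProjection (π a x) = π a (S.starProjection x) := by
  apply Submodule.eq_starProjection_of_mem_orthogonal
  · exact h a _ (Submodule.starProjection_apply_mem _ _)
  · rw [← map_sub, Submodule.mem_orthogonal]
    intro u hu
    rw [rep_inner_right]
    exact (Submodule.mem_orthogonal _ _).1 (Submodule.sub_starProjection_mem_orthogonal x) _
      (h _ _ hu)

/-- Restriction of a representation to a closed invariant subspace. -/
noncomputable def subRep (π : A →⋆ₙₐ[ℂ] (H →L[ℂ] H)) (S : Submodule ℂ H) [CompleteSpace S]
    (h : ∀ a : A, ∀ x ∈ S, π a x ∈ S) : A →⋆ₙₐ[ℂ] (S →L[ℂ] S) where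
  toFun a := (π a).restrict (h a)
  map_smul' c a := by ext x; simp
  map_zero' := by ext x; simp
  map_add' a b := by ext x; simp
  map_mul' a b := by ext x; simp
  map_star' a := by
    rw [ContinuousLinearMap.star_eq_adjoint, ContinuousLinearMap.eq_adjoint_iff]
    intro x y
    simp [Submodule.coe_inner, rep_inner_left]

@[simp] theorem subRep_apply (π : A →⋆ₙₐ[ℂ] (H →L[ℂ] H)) (S : Submodule ℂ H) [CompleteSpace S]
    (h : ∀ a : A, ∀ x ∈ S, π a x ∈ S) (a : A) (x : S) : (subRep π S h a x : H) = π a x := rfl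

theorem vecFn_representable (π : A →⋆ₙₐ[ℂ] (H →L[ℂ] H)) (v : H) : IsRepresentable (vecFn π v) := by
  refine ⟨cyc π v, inferInstance, inferInstance, inferInstance,
    subRep π (cyc π v) (cyc_invt π v), ⟨(cyc π v).starProjection v,
      Submodule.starProjection_apply_mem _ _⟩, ?_, ?_⟩
  · have key : ∀ a, π a ((cyc π v).starProjection v) = π a v := fun a => by
      rw [← proj_comm π _ (cyc_invt π v), Submodule.starProjection_eq_self_iff]
      exact mem_cyc _ _ _
    intro x
    rw [Metric.mem_closure_iff]
    intro ε hε
    obtain ⟨a, ha⟩ := exists_approx_of_mem_cyc π v x x.2 ε hε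
    refine ⟨_, ⟨a, rfl⟩, ?_⟩
    rw [dist_comm, dist_eq_norm]
    change ‖π a ((cyc π v).starProjection v) - x‖ < ε
    rwa [key]
  · intro a
    rw [vecFn_apply, Submodule.coe_inner]
    simp only [subRep_apply]
    rw [← proj_comm π _ (cyc_invt π v), ← Submodule.inner_starProjection_left_eq_right,
      Submodule.starProjection_eq_self_iff.2 (Submodule.starProjection_apply_mem _ _),
      Submodule.inner_starProjection_left_eq_right,
      Submodule.starProjection_eq_self_iff.2 (mem_cyc _ _ _)]

/-- Nondegeneracy on a cyclic space. -/
theorem eq_of_forall_rep_eq (π : A →⋆ₙₐ[ℂ] (H →L[ℂ] H)) (u : H)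
    (hu : DenseRange (fun a : A => π a u)) (x y : H) (h : ∀ a, π a x = π a y) : x = y := by
  rw [← sub_eq_zero]
  apply hu.eq_zero_of_inner_left (𝕜 := ℂ)
  intro a
  rw [rep_inner_right, map_sub, h, sub_self, inner_zero_left]

/-- Radon-Nikodym type intertwiner. -/
theorem exists_intertwiner (π : A →⋆ₙₐ[ℂ] (H →L[ℂ] H)) (v : H) (σ : A →⋆ₙₐ[ℂ] (K →L[ℂ] K)) (u : K)
    (hu : DenseRange (fun a : A => σ a u)) (c : ℝ) (hc : 0 ≤ c)
    (h : ∀ a, ‖σ a u‖ ^ 2 ≤ c * ‖π a v‖ ^ 2) :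
    ∃ J : H →L[ℂ] K, (∀ a x, J (π a x) = σ a (J x)) ∧ J v = u ∧ ∀ x, ‖J x‖ ^ 2 ≤ c * ‖x‖ ^ 2 := by
  have h' : ∀ a, ‖σ a u‖ ≤ √c * ‖π a v‖ := fun a => by
    rw [← sq_le_sq₀ (norm_nonneg _) (by positivity), mul_pow, Real.sq_sqrt hc]; exact h a
  let e : A →ₗ[ℂ] cyc π v := (orb π v).codRestrict (cyc π v) (mem_cyc π v)
  have he : DenseRange e := by
    intro x
    rw [Metric.mem_closure_iff]
    intro ε hε
    obtain ⟨a, ha⟩ := exists_approx_of_mem_cyc π v x x.2 ε hε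
    refine ⟨_, ⟨a, rfl⟩, ?_⟩
    rw [dist_comm, dist_eq_norm]
    exact ha
  have hn : ∀ a, ‖orb σ u a‖ ≤ √c * ‖e a‖ := h'
  let J0 := (orb σ u).extendOfNorm e
  have hJ0 : ∀ a, J0 (e a) = σ a u := fun a => LinearMap.extendOfNorm_eq he ⟨_, hn⟩ a
  have hJn : ∀ x, ‖J0 x‖ ≤ √c * ‖x‖ := fun x => LinearMap.norm_extendOfNorm_apply_le he _ hn x
  let J : H →L[ℂ] K := J0.comp (cyc π v).orthogonalProjectionOnto
  have hJorb : ∀ a, J (π a v) = σ a u := fun a => by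
    rw [← hJ0]
    change J0 ((cyc π v).orthogonalProjectionOnto (π a v)) = _
    congr 1
    exact Submodule.orthogonalProjectionOnto_mem_subspace_eq_self (e a)
  have hJc : ∀ a (x : cyc π v), J (π a x) = σ a (J x) := by
    intro a x
    have hcl : IsClosed {x : cyc π v | J (π a x) = σ a (J x)} :=
      isClosed_eq (by fun_prop) (by fun_prop)
    refine hcl.closure_subset_iff.2 ?_ (he x)
    rintro _ ⟨b, rfl⟩
    change J (π a (π b v)) = σ a (J (π b v))
    rw [← rep_mul_apply, hJorb, hJorb, rep_mul_apply]
  have hJP : ∀ x, J x = J ((cyc π v).starProjection x) := fun x => by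
    change J0 _ = J0 _
    congr 1
    exact (Submodule.orthogonalProjectionOnto_mem_subspace_eq_self
      ((cyc π v).orthogonalProjectionOnto x)).symm
  have hJ : ∀ a x, J (π a x) = σ a (J x) := by
    intro a x
    rw [hJP (π a x), proj_comm π _ (cyc_invt π v), hJP x]
    exact hJc a ⟨_, Submodule.starProjection_apply_mem _ x⟩
  refine ⟨J, hJ, ?_, ?_⟩
  · apply eq_of_forall_rep_eq σ u hu
    intro a
    rw [← hJ, hJorb]
  · intro x
    have h1 : ‖J x‖ ≤ √c * ‖x‖ := (hJn _).trans
      (mul_le_mul_of_nonneg_left ((cyc π v).norm_orthogonalProjectionOnto_apply_le x) (by positivity))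
    calc ‖J x‖ ^ 2 ≤ (√c * ‖x‖) ^ 2 := by gcongr
      _ = c * ‖x‖ ^ 2 := by rw [mul_pow, Real.sq_sqrt hc]
theorem orth_invt (π : A →⋆ₙₐ[ℂ] (H →L[ℂ] H)) (S : Submodule ℂ H)
    (h : ∀ a : A, ∀ x ∈ S, π a x ∈ S) (a : A) (x : H) (hx : x ∈ Sᗮ) : π a x ∈ Sᗮ := by
  rw [Submodule.mem_orthogonal] at *
  intro u hu
  rw [rep_inner_right]
  exact hx _ (h _ _ hu)

theorem IsRepresentable.exists_vec {f : A →ₗ[ℂ] ℂ} (hf : IsRepresentable f) :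
    ∃ (H : Type) (_ : NormedAddCommGroup H) (_ : InnerProductSpace ℂ H) (_ : CompleteSpace H)
      (π : A →⋆ₙₐ[ℂ] (H →L[ℂ] H)) (ξ : H),
      DenseRange (fun a : A => π a ξ) ∧ f = vecFn π ξ := by
  obtain ⟨H, i1, i2, i3, π, ξ, h1, h2⟩ := hf
  exact ⟨H, i1, i2, i3, π, ξ, h1, LinearMap.ext h2⟩

theorem IsRepresentable.smul {f : A →ₗ[ℂ] ℂ} (hf : IsRepresentable f) (c : ℝ) (hc : 0 ≤ c) :
    IsRepresentable ((c : ℂ) • f) := by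
  obtain ⟨H, i1, i2, i3, π, ξ, h1, rfl⟩ := hf.exists_vec
  have : (c : ℂ) • vecFn π ξ = vecFn π ((√c : ℂ) • ξ) := by
    ext a
    rw [LinearMap.smul_apply, vecFn_apply, vecFn_apply, map_smul, inner_smul_left, inner_smul_right,
      Complex.conj_ofReal, ← mul_assoc, ← Complex.ofReal_mul, Real.mul_self_sqrt hc, smul_eq_mul]
  rw [this]
  exact vecFn_representable _ _

theorem vecFn_eq_zero (π : A →⋆ₙₐ[ℂ] (H →L[ℂ] H)) (v : H) (h : vecFn π v = 0) (a : A) :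
    π a v = 0 := by
  have := vecFn_star_mul_self π v a
  rw [h, LinearMap.zero_apply] at this
  have h2 : ‖π a v‖ ^ 2 = 0 := by exact_mod_cast this.symm
  simpa using h2

theorem IsRepresentable.zero : IsRepresentable (0 : A →ₗ[ℂ] ℂ) := by
  have : (0 : A →ₗ[ℂ] ℂ) = vecFn (0 : A →⋆ₙₐ[ℂ] (ℂ →L[ℂ] ℂ)) 0 := by
    ext a; simp [vecFn_apply]
  rw [this]
  exact vecFn_representable _ _

theorem IsRepresentable.pos {f : A →ₗ[ℂ] ℂ} (hf : IsRepresentable f) : IsPosFn f := by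
  obtain ⟨H, i1, i2, i3, π, ξ, h1, rfl⟩ := hf.exists_vec
  exact vecFn_pos _ _
end Basics

open scoped ComplexOrder InnerProductSpace
set_option linter.unusedSectionVars false
section Prod

variable {A : Type} [NonUnitalRing A] [Module ℂ A] [SMulCommClass ℂ A A]
  [IsScalarTower ℂ A A] [StarRing A] [StarModule ℂ A]
variable {G : Type} [NormedAddCommGroup G] [InnerProductSpace ℂ G] [CompleteSpace G]
variable {F : Type} [NormedAddCommGroup F] [InnerProductSpace ℂ F] [CompleteSpace F]

/-- Pairs in the Hilbert space direct sum. -/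
abbrev pr (x : G) (y : F) : WithLp 2 (G × F) := WithLp.toLp 2 (x, y)

theorem norm_pr (x : G) (y : F) : ‖pr x y‖ ^ 2 = ‖x‖ ^ 2 + ‖y‖ ^ 2 :=
  WithLp.prod_norm_sq_eq_of_L2 _

theorem pr_sub (x x' : G) (y y' : F) : pr x y - pr x' y' = pr (x - x') (y - y') := rfl

/-- Direct sum of operators. -/
noncomputable def prodOp (S : G →L[ℂ] G) (T : F →L[ℂ] F) :
    WithLp 2 (G × F) →L[ℂ] WithLp 2 (G × F) :=
  ((WithLp.prodContinuousLinearEquiv 2 ℂ G F).symm : G × F →L[ℂ] WithLp 2 (G × F)).comp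
    ((S.prodMap T).comp
      (WithLp.prodContinuousLinearEquiv 2 ℂ G F : WithLp 2 (G × F) →L[ℂ] G × F))

theorem prodOp_apply (S : G →L[ℂ] G) (T : F →L[ℂ] F) (w : WithLp 2 (G × F)) :
    prodOp S T w = pr (S w.fst) (T w.snd) := rfl

/-- Direct sum of representations. -/
noncomputable def prodRep (π : A →⋆ₙₐ[ℂ] (G →L[ℂ] G)) (σ : A →⋆ₙₐ[ℂ] (F →L[ℂ] F)) :
    A →⋆ₙₐ[ℂ] (WithLp 2 (G × F) →L[ℂ] WithLp 2 (G × F)) where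
  toFun a := prodOp (π a) (σ a)
  map_smul' c a := by ext x : 1; simp [prodOp_apply]; rfl
  map_zero' := by ext x : 1; simp [prodOp_apply]
  map_add' a b := by ext x : 1; simp [prodOp_apply]; rfl
  map_mul' a b := by ext x : 1; simp [prodOp_apply]
  map_star' a := by
    rw [ContinuousLinearMap.star_eq_adjoint, ContinuousLinearMap.eq_adjoint_iff]
    intro x y
    simp [prodOp_apply, WithLp.prod_inner_apply, rep_inner_left]

theorem prodRep_apply (π : A →⋆ₙₐ[ℂ] (G →L[ℂ] G)) (σ : A →⋆ₙₐ[ℂ] (F →L[ℂ] F)) (a : A)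
    (w : WithLp 2 (G × F)) : prodRep π σ a w = pr (π a w.fst) (σ a w.snd) := rfl

theorem prodRep_pr (π : A →⋆ₙₐ[ℂ] (G →L[ℂ] G)) (σ : A →⋆ₙₐ[ℂ] (F →L[ℂ] F)) (a : A)
    (x : G) (y : F) : prodRep π σ a (pr x y) = pr (π a x) (σ a y) := rfl

/-- First inclusion. -/
noncomputable def inlL : G →L[ℂ] WithLp 2 (G × F) :=
  ((WithLp.prodContinuousLinearEquiv 2 ℂ G F).symm : G × F →L[ℂ] WithLp 2 (G × F)).comp
    (ContinuousLinearMap.inl ℂ G F)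

@[simp] theorem inlL_apply (x : G) : (inlL x : WithLp 2 (G × F)) = pr x 0 := rfl

theorem IsRepresentable.add {f g : A →ₗ[ℂ] ℂ} (hf : IsRepresentable f) (hg : IsRepresentable g) :
    IsRepresentable (f + g) := by
  obtain ⟨H, i1, i2, i3, π, ξ, h1, rfl⟩ := hf.exists_vec
  obtain ⟨K, j1, j2, j3, σ, η, h1, rfl⟩ := hg.exists_vec
  have : vecFn π ξ + vecFn σ η = vecFn (prodRep π σ) (pr ξ η) := by
    ext a
    rw [vecFn_apply, prodRep_pr, WithLp.prod_inner_apply]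
    rfl
  rw [this]
  exact vecFn_representable _ _

/-- The singular lemma. -/
theorem singular_approx (π : A →⋆ₙₐ[ℂ] (G →L[ℂ] G)) (η : G) (σ : A →⋆ₙₐ[ℂ] (F →L[ℂ] F)) (θ : F)
    (h : SingularR (vecFn σ θ) (vecFn π η)) (b : A) (ε : ℝ) (hε : 0 < ε) :
    ∃ a, ‖π a η - π b η‖ < ε ∧ ‖σ a θ‖ < ε := by
  set ρ := prodRep π σ with hρ
  set Δ := cyc ρ (pr η θ) with hΔ
  have hinv := orth_invt ρ Δ (cyc_invt ρ _)
  set w : WithLp 2 (G × F) := Δᗮ.starProjection (pr η 0) with hw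
  have hw1 : ∀ a, ρ a w = Δᗮ.starProjection (pr (π a η) 0) := fun a => by
    have h0 : ρ a (pr η 0) = pr (π a η) 0 := by rw [hρ, prodRep_pr, map_zero]
    rw [hw, ← proj_comm ρ _ hinv, h0]
  have hp : vecFn ρ w = 0 := by
    apply h _ (vecFn_representable _ _) (vecFn_pos _ _)
    · rw [fnLE_vecFn_iff']
      intro a
      have : ρ a w = Δᗮ.starProjection (pr 0 (-(σ a θ))) := by
        have h0 : Δᗮ.starProjection (pr (π a η) (σ a θ)) = 0 := by
          rw [Submodule.starProjection_apply_eq_zero_iff]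
          exact Submodule.le_orthogonal_orthogonal _ (mem_cyc ρ (pr η θ) a)
        rw [hw1, ← sub_zero (Δᗮ.starProjection (pr (π a η) 0)), ← h0, ← map_sub, pr_sub, sub_self,
          zero_sub]
      have h2 := Submodule.norm_starProjection_apply_le Δᗮ (pr (0 : G) (-(σ a θ)))
      calc _ ≤ ‖pr (0 : G) (-(σ a θ))‖ ^ 2 := by rw [this]; gcongr
        _ = _ := by rw [norm_pr]; simp
    · rw [fnLE_vecFn_iff']
      intro a
      have h2 := Submodule.norm_starProjection_apply_le Δᗮ (pr (π a η) (0 : F))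
      calc _ ≤ ‖pr (π a η) (0 : F)‖ ^ 2 := by rw [hw1]; gcongr
        _ = _ := by rw [norm_pr]; simp
  have h3 := vecFn_eq_zero ρ w hp b
  rw [hw1, Submodule.starProjection_apply_eq_zero_iff, Submodule.orthogonal_orthogonal] at h3
  obtain ⟨a, ha⟩ := exists_approx_of_mem_cyc ρ _ _ h3 ε hε
  rw [hρ, prodRep_pr, pr_sub, sub_zero] at ha
  exact ⟨a, (WithLp.norm_fst_le _ (pr _ (σ a θ))).trans_lt ha,
    (WithLp.norm_snd_le _ (pr (π a η - π b η) _)).trans_lt ha⟩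

end Prod

open scoped ComplexOrder InnerProductSpace
set_option linter.unusedSectionVars false
section Core

variable {A : Type} [NonUnitalRing A] [Module ℂ A] [SMulCommClass ℂ A A]
  [IsScalarTower ℂ A A] [StarRing A] [StarModule ℂ A]
variable {G : Type} [NormedAddCommGroup G] [InnerProductSpace ℂ G] [CompleteSpace G]
variable {F : Type} [NormedAddCommGroup F] [InnerProductSpace ℂ F] [CompleteSpace F]
variable {X : Type} [NormedAddCommGroup X] [InnerProductSpace ℂ X] [CompleteSpace X]

theorem cyc_subset (π : A →⋆ₙₐ[ℂ] (X →L[ℂ] X)) (v : X) (C : Set X) (hC : IsClosed C)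
    (h : ∀ a, π a v ∈ C) : ∀ x ∈ cyc π v, x ∈ C := by
  intro x hx
  have : x ∈ closure (LinearMap.range (orb π v) : Set X) := hx
  refine closure_minimal ?_ hC this
  rintro _ ⟨a, rfl⟩
  exact h a

theorem dense_inl (Γ : Submodule ℂ (WithLp 2 (G × F))) [CompleteSpace Γ]
    (hcl : ∀ m : F, pr 0 m ∈ Γ → m = 0) (w : WithLp 2 (G × F)) (hw : w ∈ Γ) (ε : ℝ) (hε : 0 < ε) :
    ∃ x : G, ‖Γ.starProjection (inlL x) - w‖ < ε := by
  let q : G →L[ℂ] WithLp 2 (G × F) := Γ.starProjection.comp inlL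
  let D := (LinearMap.range (q : G →ₗ[ℂ] WithLp 2 (G × F))).topologicalClosure
  have hDc : IsClosed (D : Set (WithLp 2 (G × F))) := Submodule.isClosed_topologicalClosure _
  have : CompleteSpace D := hDc.completeSpace_coe
  have hΓ : IsClosed (Γ : Set (WithLp 2 (G × F))) :=
    (completeSpace_coe_iff_isComplete.1 ‹CompleteSpace Γ›).isClosed
  have hDΓ : D ≤ Γ := by
    apply Submodule.topologicalClosure_minimal _ _ hΓ
    rintro _ ⟨x, rfl⟩
    exact Submodule.starProjection_apply_mem _ _
  have hu : w - D.starProjection w ∈ Γ :=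
    Γ.sub_mem hw (hDΓ (Submodule.starProjection_apply_mem _ _))
  have hu2 := Submodule.sub_starProjection_mem_orthogonal (K := D) w
  set u := w - D.starProjection w with hudef
  have h1 : ∀ x : G, ⟪x, u.fst⟫_ℂ = 0 := by
    intro x
    have h2 := (Submodule.mem_orthogonal _ _).1 hu2 (q x)
      (Submodule.le_topologicalClosure _ ⟨x, rfl⟩)
    change ⟪Γ.starProjection (inlL x), u⟫_ℂ = 0 at h2
    rw [Submodule.inner_starProjection_left_eq_right, Submodule.starProjection_eq_self_iff.2 hu,
      WithLp.prod_inner_apply] at h2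
    simpa using h2
  have h2 : u.fst = 0 := by
    have := h1 u.fst
    rwa [inner_self_eq_zero] at this
  have h3 : u = pr 0 u.snd := by
    rw [← h2]; rfl
  have h4 : u = 0 := by
    rw [h3] at hu
    rw [h3, hcl _ hu]; rfl
  have h5 : w ∈ D := by
    rw [← Submodule.starProjection_eq_self_iff]
    exact (sub_eq_zero.1 h4).symm
  have h6 : w ∈ closure (LinearMap.range (q : G →ₗ[ℂ] WithLp 2 (G × F)) : Set _) := h5
  rw [Metric.mem_closure_iff] at h6
  obtain ⟨_, ⟨x, rfl⟩, h⟩ := h6 ε hε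
  refine ⟨x, ?_⟩
  rw [dist_comm, dist_eq_norm] at h
  exact h

/-- Iterated approximation. -/
theorem iter_approx (T : G →L[ℂ] G) (R : G →L[ℂ] X) (Y : Set X)
    (h : ∀ x, ∀ y ∈ Y, ∀ ε > 0, ∃ w, ‖T w - x‖ < ε ∧ ‖R w - y‖ < ε) (n : ℕ) :
    ∀ (x : G) (y : ℕ → X), (∀ i, y i ∈ Y) → ∀ ε > 0,
      ∃ w, ‖(T ^ n) w - x‖ < ε ∧ ∀ i < n, ‖R ((T ^ i) w) - y i‖ < ε := by
  induction n with
  | zero => 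
    intro x y hy ε hε
    exact ⟨x, by simpa using hε, by simp⟩
  | succ n ih =>
    intro x y hy ε hε
    obtain ⟨u, hu1, hu2⟩ := h x (y n) (hy n) (ε / 2) (by positivity)
    set c := 1 + ‖T‖ + ‖R‖ with hc
    have hc1 : 1 ≤ c := by have := norm_nonneg T; have := norm_nonneg R; linarith
    have hcpos : 0 < c := by linarith
    obtain ⟨w, hw1, hw2⟩ := ih u y hy (ε / 2 / c) (by positivity)
    have hT : ‖T ((T ^ n) w) - T u‖ ≤ ε / 2 := by
      rw [← map_sub]
      calc _ ≤ ‖T‖ * ‖(T ^ n) w - u‖ := T.le_opNorm _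
        _ ≤ c * (ε / 2 / c) := by
          gcongr
          have := norm_nonneg R; linarith
        _ = ε / 2 := by field_simp
    have hR : ‖R ((T ^ n) w) - R u‖ ≤ ε / 2 := by
      rw [← map_sub]
      calc _ ≤ ‖R‖ * ‖(T ^ n) w - u‖ := R.le_opNorm _
        _ ≤ c * (ε / 2 / c) := by
          gcongr
          have := norm_nonneg T; linarith
        _ = ε / 2 := by field_simp
    refine ⟨w, ?_, ?_⟩
    · rw [pow_succ']
      change ‖T ((T ^ n) w) - x‖ < ε
      have := norm_sub_le_norm_sub_add_norm_sub (T ((T ^ n) w)) (T u) x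
      linarith
    · intro i hi
      rcases Nat.lt_succ_iff_lt_or_eq.1 hi with h | rfl
      · refine (hw2 i h).trans_le ?_
        rw [div_le_iff₀ hcpos]
        nlinarith
      · have := norm_sub_le_norm_sub_add_norm_sub (R ((T ^ i) w)) (R u) (y i)
        linarith

/-- Core lemma. -/
theorem core_lemma (π : A →⋆ₙₐ[ℂ] (G →L[ℂ] G)) (η : G) (hη : DenseRange (fun a : A => π a η))
    (σ : A →⋆ₙₐ[ℂ] (F →L[ℂ] F)) (ζ : F)
    (hcl : ∀ m : F, pr 0 m ∈ cyc (prodRep π σ) (pr η ζ) → m = 0)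
    (τ : A →⋆ₙₐ[ℂ] (X →L[ℂ] X)) (S : F →L[ℂ] X) (hS : ∀ a x, S (σ a x) = τ a (S x))
    (hsing : SingularR (vecFn τ (S ζ)) (vecFn π η)) (a0 : A) (ha0 : τ a0 (S ζ) ≠ 0) :
    ∃ v : X, v ≠ 0 ∧ ∀ (n : ℕ) (ε : ℝ), 0 < ε → ∃ a b : ℕ → A, ∀ i < n, ∀ k < n,
      ‖τ (a k) (τ (b i) v) - (if i = k then v else 0)‖ < ε := by
  set θ := S ζ with hθ
  set ρ := prodRep π σ with hρ
  set Γ := cyc ρ (pr η ζ) with hΓ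
  let q : G →L[ℂ] WithLp 2 (G × F) := Γ.starProjection.comp inlL
  let T : G →L[ℂ] G := (WithLp.fstL 2 ℂ G F).comp q
  let R : G →L[ℂ] X := S.comp ((WithLp.sndL 2 ℂ G F).comp q)
  have hq : ∀ a x, q (π a x) = ρ a (q x) := by
    intro a x
    change Γ.starProjection (pr (π a x) 0) = ρ a (Γ.starProjection (pr x 0))
    rw [← proj_comm ρ _ (cyc_invt ρ _)]
    have h0 : ρ a (pr x 0) = pr (π a x) 0 := by rw [hρ, prodRep_pr, map_zero]
    rw [h0]
  have hTa : ∀ a x, T (π a x) = π a (T x) := by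
    intro a x
    change (q (π a x)).fst = _
    rw [hq]; rfl
  have hRa : ∀ a x, R (π a x) = τ a (R x) := by
    intro a x
    change S (q (π a x)).snd = _
    rw [hq]
    change S (σ a (q x).snd) = _
    rw [hS]; rfl
  have hTn : ∀ (n : ℕ) a x, (T ^ n) (π a x) = π a ((T ^ n) x) := by
    intro n
    induction n with
    | zero => intro a x; simp
    | succ n ih =>
      intro a x
      rw [pow_succ']
      change T ((T ^ n) (π a x)) = π a (T ((T ^ n) x))
      rw [ih, hTa]
  have hRc : ∀ x, R x ∈ cyc τ θ := by
    intro x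
    have hc : IsClosed {w : WithLp 2 (G × F) | S (WithLp.sndL 2 ℂ G F w) ∈ cyc τ θ} :=
      (cyc_closed τ θ).preimage (by fun_prop)
    refine cyc_subset ρ (pr η ζ) _ hc ?_ (q x) (Submodule.starProjection_apply_mem _ _)
    intro a
    change S (σ a ζ) ∈ cyc τ θ
    rw [hS]
    exact mem_cyc _ _ _
  have step : ∀ x, ∀ y ∈ (cyc τ θ : Set X), ∀ ε > 0, ∃ w, ‖T w - x‖ < ε ∧ ‖R w - y‖ < ε := by
    intro x y hy ε hε
    obtain ⟨c, hc⟩ := exists_approx_of_mem_cyc τ θ y hy (ε / 4) (by positivity)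
    have hx : x ∈ cyc π η := by
      rw [(denseRange_iff_cyc π η).1 hη]; trivial
    obtain ⟨b, hb⟩ := exists_approx_of_mem_cyc π η x hx (ε / 4) (by positivity)
    obtain ⟨d, hd1, hd2⟩ := singular_approx π η τ θ hsing (b - c) (ε / 4) (by positivity)
    obtain ⟨w, hw⟩ := dense_inl Γ hcl _ (mem_cyc ρ (pr η ζ) (c + d)) (ε / 4 / (1 + ‖S‖))
      (by positivity)
    have hw1 : ‖(q w - pr (π (c + d) η) (σ (c + d) ζ))‖ < (ε / 4 / (1 + ‖S‖)) := hw
    have h1 : ‖T w - π (c + d) η‖ ≤ ε / 4 := by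
      refine ((WithLp.norm_fst_le _ (q w - pr (π (c + d) η) (σ (c + d) ζ))).trans hw1.le).trans ?_
      rw [div_le_iff₀ (by positivity)]
      nlinarith [norm_nonneg S]
    have h2 : ‖R w - τ (c + d) θ‖ ≤ ε / 4 := by
      have h3 := ((WithLp.norm_snd_le _ (q w - pr (π (c + d) η) (σ (c + d) ζ))).trans hw1.le)
      change ‖(q w).snd - σ (c + d) ζ‖ ≤ _ at h3
      have h4 : R w - τ (c + d) θ = S ((q w).snd - σ (c + d) ζ) := by
        rw [map_sub, hS]; rfl
      rw [h4]
      calc _ ≤ ‖S‖ * ‖(q w).snd - σ (c + d) ζ‖ := S.le_opNorm _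
        _ ≤ (1 + ‖S‖) * (ε / 4 / (1 + ‖S‖)) := by gcongr; linarith
        _ = ε / 4 := by field_simp
    refine ⟨w, ?_, ?_⟩
    · have e1 : T w - x = (T w - π (c + d) η) + (π d η - π (b - c) η) + (π b η - x) := by
        simp only [map_add, map_sub, add_apply, sub_apply]
        abel
      rw [e1]
      refine (norm_add₃_le).trans_lt ?_
      linarith
    · have e1 : R w - y = (R w - τ (c + d) θ) + τ d θ + (τ c θ - y) := by
        simp only [map_add, add_apply]
        abel
      rw [e1]
      refine (norm_add₃_le).trans_lt ?_
      linarith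
  have key : ∀ a, τ a ((cyc τ θ).starProjection θ) = τ a θ := fun a => by
    rw [← proj_comm τ _ (cyc_invt τ θ), Submodule.starProjection_eq_self_iff]
    exact mem_cyc _ _ _
  set v := (cyc τ θ).starProjection θ with hv
  have hvmem : v ∈ cyc τ θ := Submodule.starProjection_apply_mem _ _
  refine ⟨v, ?_, ?_⟩
  · intro h0
    apply ha0
    rw [← key, h0, map_zero]
  intro n ε hε
  have h1 : ∀ k : ℕ, ∃ a : A, ∀ i < n, ‖τ a (R ((T ^ i) η)) - (if i = k then v else 0)‖ < 2 * ε / 3 := by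
    intro k
    obtain ⟨w, -, hw⟩ := iter_approx T R _ step n 0 (fun i => if i = k then v else 0)
      (by intro i; split_ifs; exacts [hvmem, Submodule.zero_mem _]) (ε / 3) (by positivity)
    have hx : w ∈ cyc π η := by
      rw [(denseRange_iff_cyc π η).1 hη]; trivial
    set C := 1 + ∑ i ∈ Finset.range n, ‖R.comp (T ^ i)‖ with hC
    have hC1 : 0 < C := by positivity
    obtain ⟨a, ha⟩ := exists_approx_of_mem_cyc π η w hx (ε / 3 / C) (by positivity)
    refine ⟨a, fun i hi => ?_⟩
    have h2 : ‖R ((T ^ i) (π a η)) - R ((T ^ i) w)‖ ≤ ε / 3 := by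
      have e : R ((T ^ i) (π a η)) - R ((T ^ i) w) = (R.comp (T ^ i)) (π a η - w) := by simp
      rw [e]
      calc _ ≤ ‖R.comp (T ^ i)‖ * ‖π a η - w‖ := ContinuousLinearMap.le_opNorm _ _
        _ ≤ C * (ε / 3 / C) := by
          gcongr
          have := Finset.single_le_sum (f := fun i => ‖R.comp (T ^ i)‖) (fun i _ => norm_nonneg _)
            (Finset.mem_range.2 hi)
          linarith
        _ = ε / 3 := by field_simp
    rw [← hRa, ← hTn]
    have := norm_sub_le_norm_sub_add_norm_sub (R ((T ^ i) (π a η))) (R ((T ^ i) w))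
      (if i = k then v else 0)
    have := hw i hi
    linarith
  choose a ha using h1
  set C := 1 + ∑ k ∈ Finset.range n, ‖τ (a k)‖ with hC
  have hC1 : 0 < C := by positivity
  have h2 : ∀ i : ℕ, ∃ b : A, ‖τ b v - R ((T ^ i) η)‖ < ε / 3 / C := by
    intro i
    obtain ⟨b, hb⟩ := exists_approx_of_mem_cyc τ θ _ (hRc ((T ^ i) η)) (ε / 3 / C) (by positivity)
    exact ⟨b, by rwa [key]⟩
  choose b hb using h2
  refine ⟨a, b, fun i hi k hk => ?_⟩
  have h3 : ‖τ (a k) (τ (b i) v) - τ (a k) (R ((T ^ i) η))‖ ≤ ε / 3 := by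
    rw [← map_sub]
    calc _ ≤ ‖τ (a k)‖ * ‖τ (b i) v - R ((T ^ i) η)‖ := ContinuousLinearMap.le_opNorm _ _
      _ ≤ C * (ε / 3 / C) := by
        gcongr
        · have := Finset.single_le_sum (f := fun i => ‖τ (a i)‖) (fun i _ => norm_nonneg _)
            (Finset.mem_range.2 hk)
          linarith
        · exact (hb i).le
      _ = ε / 3 := by field_simp
  have := norm_sub_le_norm_sub_add_norm_sub (τ (a k) (τ (b i) v)) (τ (a k) (R ((T ^ i) η)))
      (if i = k then v else 0)
  have := ha k i hi
  linarith

end Core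

open scoped ComplexOrder InnerProductSpace
set_option linter.unusedSectionVars false
section Formula

variable {A : Type} [NonUnitalRing A] [Module ℂ A] [SMulCommClass ℂ A A]
  [IsScalarTower ℂ A A] [StarRing A] [StarModule ℂ A]
variable {G : Type} [NormedAddCommGroup G] [InnerProductSpace ℂ G] [CompleteSpace G]
variable {F : Type} [NormedAddCommGroup F] [InnerProductSpace ℂ F] [CompleteSpace F]
variable {X : Type} [NormedAddCommGroup X] [InnerProductSpace ℂ X] [CompleteSpace X]

theorem contr_ineq (J : F →L[ℂ] X) (hJ : ∀ x, ‖J x‖ ^ 2 ≤ ‖x‖ ^ 2) (y z : F) (hz : J z = 0) :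
    ‖⟪y, z⟫_ℂ‖ ^ 2 ≤ (‖y‖ ^ 2 - ‖J y‖ ^ 2) * ‖z‖ ^ 2 := by
  set u := y - ContinuousLinearMap.adjoint J (J y) with hu
  have h1 : ⟪y, z⟫_ℂ = ⟪u, z⟫_ℂ := by
    rw [hu, inner_sub_left, ContinuousLinearMap.adjoint_inner_left, hz, inner_zero_right, sub_zero]
  have hJ1 : ‖J‖ ≤ 1 := J.opNorm_le_bound zero_le_one fun x => by
    rw [one_mul]
    exact (sq_le_sq₀ (norm_nonneg _) (norm_nonneg _)).1 (hJ x)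
  have h2 : ‖u‖ ^ 2 ≤ ‖y‖ ^ 2 - ‖J y‖ ^ 2 := by
    rw [hu, norm_sub_sq (𝕜 := ℂ), ContinuousLinearMap.adjoint_inner_right,
      inner_self_eq_norm_sq (𝕜 := ℂ)]
    have h3 : ‖ContinuousLinearMap.adjoint J (J y)‖ ≤ ‖J y‖ := by
      refine (ContinuousLinearMap.le_opNorm _ _).trans ?_
      rw [LinearIsometryEquiv.norm_map]
      exact mul_le_of_le_one_left (norm_nonneg _) hJ1
    have h4 : ‖ContinuousLinearMap.adjoint J (J y)‖ ^ 2 ≤ ‖J y‖ ^ 2 := by gcongr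
    linarith
  rw [h1]
  calc _ ≤ (‖u‖ * ‖z‖) ^ 2 := by gcongr; exact norm_inner_le_norm _ _
    _ = ‖u‖ ^ 2 * ‖z‖ ^ 2 := by ring
    _ ≤ _ := by gcongr

/-- Absolutely continuous functionals are closable. -/
theorem closab (π : A →⋆ₙₐ[ℂ] (G →L[ℂ] G)) (η : G) (σ : A →⋆ₙₐ[ℂ] (F →L[ℂ] F)) (ξ : F)
    (ρ : A →⋆ₙₐ[ℂ] (X →L[ℂ] X)) (ξr : X) (hξr : DenseRange (fun a : A => ρ a ξr))
    (hac : AbsContR (vecFn ρ ξr) (vecFn π η)) (J : F →L[ℂ] X)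
    (hJ : ∀ a x, J (σ a x) = ρ a (J x)) (hJξ : J ξ = ξr) (m : F)
    (hm : pr 0 m ∈ cyc (prodRep π σ) (pr η ξ)) : J m = 0 := by
  obtain ⟨fn, α, h1, h2, h3, h4, h5⟩ := hac
  have hv : ∀ n, ∃ (H : Type) (_ : NormedAddCommGroup H) (_ : InnerProductSpace ℂ H)
      (_ : CompleteSpace H) (π : A →⋆ₙₐ[ℂ] (H →L[ℂ] H)) (ξ : H),
      DenseRange (fun a : A => π a ξ) ∧ fn n = vecFn π ξ := fun n => (h1 n).1.exists_vec
  choose K i1 i2 i3 τ κ hκ hfn using hv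
  have hmono : ∀ b n, ‖τ n b (κ n)‖ ^ 2 ≤ ‖τ (n + 1) b (κ (n + 1))‖ ^ 2 := by
    intro b n
    have := h3 n
    rw [hfn, hfn, fnLE_vecFn_iff'] at this
    exact this b
  have hlim : ∀ b, Filter.Tendsto (fun n => ‖τ n b (κ n)‖ ^ 2) Filter.atTop
      (nhds (‖ρ b ξr‖ ^ 2)) := by
    intro b
    have h6 := h5 (star b * b)
    simp only [hfn, vecFn_star_mul_self] at h6
    have := (Complex.continuous_re.tendsto _).comp h6
    simpa only [Function.comp_def, Complex.ofReal_re] using this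
  have hle : ∀ n b, ‖τ n b (κ n)‖ ^ 2 ≤ ‖ρ b ξr‖ ^ 2 := fun n b =>
    (monotone_nat_of_le_succ (hmono b)).ge_of_tendsto (hlim b) n
  apply hξr.eq_zero_of_inner_right (𝕜 := ℂ)
  intro b
  have hbound : ∀ n, ‖⟪ρ b ξr, J m⟫_ℂ‖ ^ 2 ≤ (‖ρ b ξr‖ ^ 2 - ‖τ n b (κ n)‖ ^ 2) * ‖J m‖ ^ 2 := by
    intro n
    obtain ⟨Jn, hJn1, hJn2, hJn3⟩ := exists_intertwiner ρ ξr (τ n) (κ n) (hκ n) 1 zero_le_one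
      (fun a => by rw [one_mul]; exact hle n a)
    have hz : Jn (J m) = 0 := by
      have hc : IsClosed {w : WithLp 2 (G × F) | ‖Jn (J (WithLp.sndL 2 ℂ G F w))‖ ^ 2 ≤
          α n * ‖WithLp.fstL 2 ℂ G F w‖ ^ 2} := isClosed_le (by fun_prop) (by fun_prop)
      have := cyc_subset _ _ _ hc (by
        intro a
        change ‖Jn (J (σ a ξ))‖ ^ 2 ≤ α n * ‖π a η‖ ^ 2
        rw [hJ, hJξ, hJn1, hJn2]
        have h7 := h4 n
        rw [hfn, fnLE_vecFn_iff] at h7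
        exact h7 a) _ hm
      change ‖Jn (J m)‖ ^ 2 ≤ α n * ‖(0 : G)‖ ^ 2 at this
      have h8 : ‖Jn (J m)‖ ^ 2 ≤ 0 := by simpa using this
      have h9 : ‖Jn (J m)‖ ^ 2 = 0 := le_antisymm h8 (sq_nonneg _)
      simpa using h9
    have := contr_ineq Jn (fun x => by simpa using hJn3 x) (ρ b ξr) (J m) hz
    rwa [hJn1, hJn2] at this
  have hl2 : Filter.Tendsto (fun n => (‖ρ b ξr‖ ^ 2 - ‖τ n b (κ n)‖ ^ 2) * ‖J m‖ ^ 2) Filter.atTop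
      (nhds ((‖ρ b ξr‖ ^ 2 - ‖ρ b ξr‖ ^ 2) * ‖J m‖ ^ 2)) :=
    (tendsto_const_nhds.sub (hlim b)).mul tendsto_const_nhds
  have h10 := ge_of_tendsto' hl2 hbound
  rw [sub_self, zero_mul] at h10
  have h9 : ‖⟪ρ b ξr, J m⟫_ℂ‖ ^ 2 = 0 := le_antisymm h10 (sq_nonneg _)
  simpa using h9

/-- The multivalued part. -/
noncomputable def mulPart (π : A →⋆ₙₐ[ℂ] (G →L[ℂ] G)) (η : G) (σ : A →⋆ₙₐ[ℂ] (F →L[ℂ] F)) (ξ : F) :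
    Submodule ℂ F where
  carrier := {m | pr 0 m ∈ cyc (prodRep π σ) (pr η ξ)}
  add_mem' {m n} hm hn := by
    have h : pr (0 : G) (m + n) = pr 0 m + pr 0 n := by
      change _ = pr ((0 : G) + 0) (m + n)
      rw [add_zero]
    change pr 0 (m + n) ∈ cyc (prodRep π σ) (pr η ξ)
    rw [h]
    exact Submodule.add_mem _ hm hn
  zero_mem' := Submodule.zero_mem (cyc (prodRep π σ) (pr η ξ))
  smul_mem' c m hm := by
    have h : pr (0 : G) (c • m) = c • pr 0 m := by
      change _ = pr (c • (0 : G)) (c • m)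
      rw [smul_zero]
    change pr 0 (c • m) ∈ cyc (prodRep π σ) (pr η ξ)
    rw [h]
    exact Submodule.smul_mem _ _ hm

theorem mem_mulPart (π : A →⋆ₙₐ[ℂ] (G →L[ℂ] G)) (η : G) (σ : A →⋆ₙₐ[ℂ] (F →L[ℂ] F)) (ξ m : F) :
    m ∈ mulPart π η σ ξ ↔ pr 0 m ∈ cyc (prodRep π σ) (pr η ξ) := Iff.rfl

theorem mulPart_closed (π : A →⋆ₙₐ[ℂ] (G →L[ℂ] G)) (η : G) (σ : A →⋆ₙₐ[ℂ] (F →L[ℂ] F)) (ξ : F) :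
    IsClosed (mulPart π η σ ξ : Set F) := by
  have : Continuous (fun m : F => (pr 0 m : WithLp 2 (G × F))) := by
    unfold pr; fun_prop
  exact (cyc_closed (prodRep π σ) (pr η ξ)).preimage this

instance mulPart_complete (π : A →⋆ₙₐ[ℂ] (G →L[ℂ] G)) (η : G) (σ : A →⋆ₙₐ[ℂ] (F →L[ℂ] F)) (ξ : F) :
    CompleteSpace (mulPart π η σ ξ) := (mulPart_closed π η σ ξ).completeSpace_coe

theorem mulPart_invt (π : A →⋆ₙₐ[ℂ] (G →L[ℂ] G)) (η : G) (σ : A →⋆ₙₐ[ℂ] (F →L[ℂ] F)) (ξ : F)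
    (a : A) (m : F) (hm : m ∈ mulPart π η σ ξ) : σ a m ∈ mulPart π η σ ξ := by
  rw [mem_mulPart] at *
  have := cyc_invt _ _ a _ hm
  rwa [prodRep_pr, map_zero] at this

variable {X' : Type} [NormedAddCommGroup X'] [InnerProductSpace ℂ X'] [CompleteSpace X']

/-- The formula for the absolutely continuous part, or the spreading property. -/
theorem leb_formula (π : A →⋆ₙₐ[ℂ] (G →L[ℂ] G)) (η : G) (hη : DenseRange (fun a : A => π a η))
    (σ : A →⋆ₙₐ[ℂ] (F →L[ℂ] F)) (ξ : F) (hξ : DenseRange (fun a : A => σ a ξ))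
    (ρ : A →⋆ₙₐ[ℂ] (X →L[ℂ] X)) (ξr : X) (hξr : DenseRange (fun a : A => ρ a ξr))
    (τ : A →⋆ₙₐ[ℂ] (X' →L[ℂ] X')) (ξs : X') (hξs : DenseRange (fun a : A => τ a ξs))
    (hsum : vecFn σ ξ = vecFn ρ ξr + vecFn τ ξs)
    (hac : AbsContR (vecFn ρ ξr) (vecFn π η)) (hsing : SingularR (vecFn τ ξs) (vecFn π η)) :
    (∀ a, vecFn ρ ξr a = ⟪ξ, (mulPart π η σ ξ)ᗮ.starProjection (σ a ξ)⟫_ℂ) ∨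
    ∃ v : X', v ≠ 0 ∧ ∀ (n : ℕ) (ε : ℝ), 0 < ε → ∃ a b : ℕ → A, ∀ i < n, ∀ k < n,
      ‖τ (a k) (τ (b i) v) - (if i = k then v else 0)‖ < ε := by
  have hs2 : ∀ a, ‖ρ a ξr‖ ^ 2 + ‖τ a ξs‖ ^ 2 = ‖σ a ξ‖ ^ 2 := by
    intro a
    have := LinearMap.congr_fun hsum (star a * a)
    rw [LinearMap.add_apply, vecFn_star_mul_self, vecFn_star_mul_self, vecFn_star_mul_self] at this
    exact_mod_cast this.symm
  obtain ⟨J, hJ, hJξ, -⟩ := exists_intertwiner σ ξ ρ ξr hξr 1 zero_le_one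
    (fun a => by rw [one_mul, ← hs2]; linarith [sq_nonneg (‖τ a ξs‖)])
  obtain ⟨S, hS, hSξ, -⟩ := exists_intertwiner σ ξ τ ξs hξs 1 zero_le_one
    (fun a => by rw [one_mul, ← hs2]; linarith [sq_nonneg (‖ρ a ξr‖)])
  have hadd : ∀ y, ‖J y‖ ^ 2 + ‖S y‖ ^ 2 = ‖y‖ ^ 2 := by
    intro y
    have hc : IsClosed {y | ‖J y‖ ^ 2 + ‖S y‖ ^ 2 = ‖y‖ ^ 2} :=
      isClosed_eq (by fun_prop) (by fun_prop)
    refine hc.closure_subset_iff.2 ?_ (hξ y)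
    rintro _ ⟨a, rfl⟩
    change ‖J (σ a ξ)‖ ^ 2 + ‖S (σ a ξ)‖ ^ 2 = ‖σ a ξ‖ ^ 2
    rw [hJ, hJξ, hS, hSξ, hs2]
  set M := mulPart π η σ ξ with hM
  have hMinv := orth_invt σ M (mulPart_invt π η σ ξ)
  have hPM : ∀ y, y - Mᗮ.starProjection y ∈ M := by
    intro y
    have := Submodule.sub_starProjection_mem_orthogonal (K := Mᗮ) y
    rwa [Submodule.orthogonal_orthogonal] at this
  have hJP : ∀ y, J (Mᗮ.starProjection y) = J y := by
    intro y
    have := closab π η σ ξ ρ ξr hξr hac J hJ hJξ _ (hPM y)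
    rw [map_sub, sub_eq_zero] at this
    exact this.symm
  set ζ := Mᗮ.starProjection ξ with hζ
  have haζ : ∀ a, σ a ζ = Mᗮ.starProjection (σ a ξ) := fun a => (proj_comm σ _ hMinv a ξ).symm
  by_cases hzero : ∀ a, τ a (S ζ) = 0
  · left
    have hSP : ∀ y, S (Mᗮ.starProjection y) = 0 := by
      intro y
      have hc : IsClosed {y | S (Mᗮ.starProjection y) = 0} :=
        isClosed_eq (by fun_prop) (by fun_prop)
      refine hc.closure_subset_iff.2 ?_ (hξ y)
      rintro _ ⟨a, rfl⟩
      change S (Mᗮ.starProjection (σ a ξ)) = 0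
      rw [← haζ, hS, hzero]
    have hT : (ContinuousLinearMap.adjoint J).comp J - Mᗮ.starProjection = 0 := by
      apply ContinuousLinearMap.coe_injective
      change _ = (0 : F →ₗ[ℂ] F)
      rw [← inner_map_self_eq_zero]
      intro y
      change ⟪ContinuousLinearMap.adjoint J (J y) - Mᗮ.starProjection y, y⟫_ℂ = 0
      have e1 : ⟪Mᗮ.starProjection y, y⟫_ℂ = ⟪Mᗮ.starProjection y, Mᗮ.starProjection y⟫_ℂ := by
        rw [Submodule.inner_starProjection_left_eq_right Mᗮ y (Mᗮ.starProjection y),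
          Submodule.starProjection_eq_self_iff.2 (Submodule.starProjection_apply_mem _ _),
          Submodule.inner_starProjection_left_eq_right]
      rw [inner_sub_left, ContinuousLinearMap.adjoint_inner_left, e1,
        inner_self_eq_norm_sq_to_K, inner_self_eq_norm_sq_to_K]
      have := hadd (Mᗮ.starProjection y)
      rw [hSP, hJP, norm_zero] at this
      have h2 : ‖J y‖ ^ 2 = ‖Mᗮ.starProjection y‖ ^ 2 := by rw [← this]; ring
      rw [sub_eq_zero]
      exact_mod_cast h2
    intro a
    rw [vecFn_apply, ← hJξ, ← hJ, ← ContinuousLinearMap.adjoint_inner_right]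
    have := congrArg (fun L : F →L[ℂ] F => L (σ a ξ)) hT
    change ContinuousLinearMap.adjoint J (J (σ a ξ)) - Mᗮ.starProjection (σ a ξ) = 0 at this
    rw [sub_eq_zero.1 this]
  · right
    push Not at hzero
    obtain ⟨a0, ha0⟩ := hzero
    refine core_lemma π η hη σ ζ ?_ τ S hS ?_ a0 ha0
    · intro m hm
      have h1 : cyc (prodRep π σ) (pr η ζ) ≤ cyc (prodRep π σ) (pr η ξ) := by
        apply cyc_le _ _ _ (cyc_closed _ _)
        intro a
        have h2 : prodRep π σ a (pr η ζ) =
            prodRep π σ a (pr η ξ) - pr 0 (σ a ξ - Mᗮ.starProjection (σ a ξ)) := by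
          rw [prodRep_pr, prodRep_pr, pr_sub, sub_zero, sub_sub_cancel, haζ]
        rw [h2]
        exact Submodule.sub_mem _ (mem_cyc _ _ _) (hPM _)
      have h3 : m ∈ M := h1 hm
      have h4 : m ∈ Mᗮ := by
        have hc : IsClosed {w : WithLp 2 (G × F) | WithLp.sndL 2 ℂ G F w ∈ Mᗮ} :=
          (Submodule.isClosed_orthogonal M).preimage (by fun_prop)
        exact cyc_subset _ _ _ hc (by
          intro a
          change σ a ζ ∈ Mᗮ
          rw [haζ]
          exact Submodule.starProjection_apply_mem _ _) _ hm
      have := (Submodule.mem_orthogonal _ _).1 h4 m h3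
      rwa [inner_self_eq_zero] at this
    · intro p hp1 hp2 hp3 hp4
      refine hsing p hp1 hp2 (hp3.trans' ?_) hp4
      rw [fnLE_vecFn_iff']
      intro a
      rw [← hSξ, ← hS, ← hS, haζ]
      have h5 := hadd (Mᗮ.starProjection (σ a ξ))
      have h6 := hadd (σ a ξ)
      rw [hJP] at h5
      have h7 : ‖Mᗮ.starProjection (σ a ξ)‖ ^ 2 ≤ ‖σ a ξ‖ ^ 2 := by
        gcongr; exact Submodule.norm_starProjection_apply_le _ _
      linarith

end Formula

open scoped ComplexOrder InnerProductSpace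
set_option linter.unusedSectionVars false
section States

theorem clm_one_apply {K : Type} [NormedAddCommGroup K] [InnerProductSpace ℂ K] (x : K) :
    (1 : K →L[ℂ] K) x = x := rfl

/-- State space of a C⋆-algebra, as a set of functions. -/
def stateSet (C : Type) [CStarAlgebra C] : Set (C → ℂ) :=
  {φ | (∀ x y, φ (x + y) = φ x + φ y) ∧ (∀ (c : ℂ) x, φ (c • x) = c * φ x) ∧
    (∀ x, ‖φ x‖ ≤ ‖x‖) ∧ (∀ x, 0 ≤ φ (star x * x)) ∧ φ 1 = 1}

variable {C : Type} [CStarAlgebra C]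

theorem stateSet_closed : IsClosed (stateSet C) := by
  unfold stateSet
  refine IsClosed.and ?_ (IsClosed.and ?_ (IsClosed.and ?_ (IsClosed.and ?_ ?_)))
  · simp only [Set.ofPred_forall]
    exact isClosed_iInter fun x => isClosed_iInter fun y => isClosed_eq (by fun_prop) (by fun_prop)
  · simp only [Set.ofPred_forall]
    exact isClosed_iInter fun x => isClosed_iInter fun y => isClosed_eq (by fun_prop) (by fun_prop)
  · simp only [Set.ofPred_forall]
    exact isClosed_iInter fun x => isClosed_le (by fun_prop) (by fun_prop)
  · simp only [Set.ofPred_forall]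
    exact isClosed_iInter fun x => isClosed_le (by fun_prop) (by fun_prop)
  · exact isClosed_eq (by fun_prop) (by fun_prop)

theorem stateSet_compact : IsCompact (stateSet C) := by
  refine IsCompact.of_isClosed_subset (isCompact_univ_pi (s := fun x : C =>
    Metric.closedBall (0 : ℂ) ‖x‖) fun x => isCompact_closedBall _ _) stateSet_closed ?_
  intro φ hφ x _
  rw [mem_closedBall_zero_iff]
  exact hφ.2.2.1 x

theorem exists_extreme {ι : Type} (d : ι → C) (φ0 : C → ℂ) (h0 : φ0 ∈ stateSet C)
    (h : ∑' i, ENNReal.ofReal (φ0 (star (d i) * d i)).re ≤ 1) :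
    ∃ φ ∈ (stateSet C).extremePoints ℝ, ∑' i, ENNReal.ofReal (φ (star (d i) * d i)).re ≤ 1 := by
  let hf : (C → ℂ) → ENNReal := fun φ => ∑' i, ENNReal.ofReal (φ (star (d i) * d i)).re
  have hlsc : LowerSemicontinuous hf := by
    apply lowerSemicontinuous_tsum
    intro i
    apply Continuous.lowerSemicontinuous
    exact ENNReal.continuous_ofReal.comp (by fun_prop)
  obtain ⟨φm, hφm, hmin⟩ := LowerSemicontinuousOn.exists_isMinOn ⟨φ0, h0⟩ stateSet_compact
    (hlsc.lowerSemicontinuousOn _)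
  rw [isMinOn_iff] at hmin
  have hm1 : hf φm ≤ 1 := (hmin φ0 h0).trans h
  let N : Set (C → ℂ) := stateSet C ∩ hf ⁻¹' Set.Iic (hf φm)
  have hN : IsCompact N := stateSet_compact.inter_right (hlsc.isClosed_preimage _)
  obtain ⟨φ, hφ⟩ := hN.extremePoints_nonempty ⟨φm, hφm, show hf φm ≤ hf φm from le_refl _⟩
  refine ⟨φ, ?_, hφ.1.2.trans hm1⟩
  rw [mem_extremePoints]
  refine ⟨hφ.1.1, ?_⟩
  intro x1 hx1 x2 hx2 hseg
  have hseg' := hseg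
  obtain ⟨a, b, ha, hb, hab, rfl⟩ := hseg
  have hsum : hf (a • x1 + b • x2) = ENNReal.ofReal a * hf x1 + ENNReal.ofReal b * hf x2 := by
    simp only [hf]
    rw [← ENNReal.tsum_mul_left, ← ENNReal.tsum_mul_left, ← ENNReal.tsum_add]
    congr 1
    ext1 i
    have p1 : 0 ≤ (x1 (star (d i) * d i)).re := (Complex.le_def.1 (hx1.2.2.2.1 (d i))).1
    have p2 : 0 ≤ (x2 (star (d i) * d i)).re := (Complex.le_def.1 (hx2.2.2.2.1 (d i))).1
    rw [← ENNReal.ofReal_mul ha.le, ← ENNReal.ofReal_mul hb.le,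
      ← ENNReal.ofReal_add (by positivity) (by positivity)]
    simp
  have hle : hf (a • x1 + b • x2) ≤ hf φm := hφ.1.2
  have htop : hf φm ≠ ⊤ := ne_top_of_le_ne_top ENNReal.one_ne_top hm1
  have hab' : ENNReal.ofReal a + ENNReal.ofReal b = 1 := by
    rw [← ENNReal.ofReal_add ha.le hb.le, hab, ENNReal.ofReal_one]
  have key : ∀ (s t : ENNReal) (u w : ENNReal), s ≠ 0 → s ≠ ⊤ → t ≠ ⊤ → s + t = 1 → hf φm ≤ w →
      s * u + t * w ≤ hf φm → u ≤ hf φm := by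
    intro s t u w hs hs' ht hst hw hh
    by_contra! hlt
    have h1 : s * hf φm < s * u := ENNReal.mul_lt_mul_right hs hs' hlt
    have h2 : t * hf φm ≤ t * w := by gcongr
    have h3 : hf φm = s * hf φm + t * hf φm := by rw [← add_mul, hst, one_mul]
    have h4 : s * hf φm + t * hf φm < s * u + t * w :=
      ENNReal.add_lt_add_of_lt_of_le (ENNReal.mul_ne_top ht htop) h1 h2
    rw [← h3] at h4
    exact absurd hh (not_le.2 h4)
  have ha' : ENNReal.ofReal a ≠ 0 := by simpa using ha
  have hb' : ENNReal.ofReal b ≠ 0 := by simpa using hb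
  rw [hsum] at hle
  have k1 : x1 ∈ N := ⟨hx1, key _ _ _ _ ha' ENNReal.ofReal_ne_top ENNReal.ofReal_ne_top hab'
    (hmin x2 hx2) hle⟩
  have k2 : x2 ∈ N := ⟨hx2, key _ _ _ _ hb' ENNReal.ofReal_ne_top ENNReal.ofReal_ne_top
    (by rw [add_comm, hab']) (hmin x1 hx1) (by rwa [add_comm])⟩
  exact (mem_extremePoints.1 hφ).2 x1 k1 x2 k2 hseg'

theorem vecState_mem {K : Type} [NormedAddCommGroup K] [InnerProductSpace ℂ K] [CompleteSpace K]
    (Φ : C →⋆ₙₐ[ℂ] (K →L[ℂ] K)) (hΦ : Φ 1 = 1) (v : K) (hv : v ≠ 0) :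
    (fun c => ((‖v‖ ^ 2 : ℝ) : ℂ)⁻¹ * ⟪v, Φ c v⟫_ℂ) ∈ stateSet C := by
  have hv' : 0 < ‖v‖ := norm_pos_iff.2 hv
  have hv2 : ((‖v‖ ^ 2 : ℝ) : ℂ) ≠ 0 := by
    norm_cast; positivity
  refine ⟨?_, ?_, ?_, ?_, ?_⟩
  · intro x y
    simp [mul_add]
  · intro c x
    simp; ring
  · intro x
    rw [norm_mul, norm_inv, Complex.norm_real, Real.norm_of_nonneg (by positivity),
      inv_mul_le_iff₀ (by positivity)]
    calc _ ≤ ‖v‖ * ‖Φ x v‖ := norm_inner_le_norm _ _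
      _ ≤ ‖v‖ * (‖x‖ * ‖v‖) := by
        gcongr
        exact ((Φ x).le_opNorm v).trans (by gcongr; exact NonUnitalStarAlgHom.norm_apply_le Φ x)
      _ = _ := by ring
  · intro x
    have : ⟪v, Φ (star x * x) v⟫_ℂ = ((‖Φ x v‖ ^ 2 : ℝ) : ℂ) := vecFn_star_mul_self Φ v x
    beta_reduce
    rw [this, ← Complex.ofReal_inv, ← Complex.ofReal_mul, Complex.zero_le_real]
    positivity
  · have : ⟪v, v⟫_ℂ = ((‖v‖ ^ 2 : ℝ) : ℂ) := by rw [inner_self_eq_norm_sq_to_K]; simp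
    beta_reduce
    rw [hΦ, clm_one_apply, this, inv_mul_cancel₀ hv2]

theorem gns_extreme (φ : C → ℂ) (hφ : φ ∈ (stateSet C).extremePoints ℝ) :
    ∃ (K : Type) (_ : NormedAddCommGroup K) (_ : InnerProductSpace ℂ K) (_ : CompleteSpace K)
      (Φ : C →⋆ₙₐ[ℂ] (K →L[ℂ] K)) (v : K), ‖v‖ = 1 ∧ Φ 1 = 1 ∧ (∀ c, φ c = ⟪v, Φ c v⟫_ℂ) ∧
      ∀ S : Submodule ℂ K, IsClosed (S : Set K) → (∀ c, ∀ x ∈ S, Φ c x ∈ S) → S = ⊥ ∨ S = ⊤ := by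
  let _ := CStarAlgebra.spectralOrder C
  let _ := CStarAlgebra.spectralOrderedRing C
  obtain ⟨hφs, hext⟩ := mem_extremePoints.1 hφ
  obtain ⟨f1, f2, f3, f4, f5⟩ := hφs
  let f : C →ₚ[ℂ] ℂ := PositiveLinearMap.mk₀
    { toFun := φ, map_add' := f1, map_smul' := fun c x => f2 c x } (by
      intro x hx
      obtain ⟨y, rfl⟩ := CStarAlgebra.nonneg_iff_eq_star_mul_self.1 hx
      exact f4 y)
  let v : f.GNS := ((f.toPreGNS 1 : f.PreGNS) : f.GNS)
  let Φ := f.gnsNonUnitalStarAlgHom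
  have hΦv : ∀ c, Φ c v = ((f.toPreGNS c : f.PreGNS) : f.GNS) := by
    intro c
    simp only [Φ, v]
    rw [PositiveLinearMap.gnsNonUnitalStarAlgHom_apply_coe]
    simp
  have hφv : ∀ c, φ c = ⟪v, Φ c v⟫_ℂ := by
    intro c
    rw [hΦv, UniformSpace.Completion.inner_coe, PositiveLinearMap.preGNS_inner_def]
    simp [f]
    rfl
  have hΦ1 : Φ 1 = 1 := map_one f.gnsStarAlgHom
  have hv1 : ‖v‖ = 1 := by
    have := hφv 1
    rw [f5, hΦ1, clm_one_apply, inner_self_eq_norm_sq_to_K] at this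
    have h1 : ((‖v‖ ^ 2 : ℝ) : ℂ) = 1 := by rw [this]; simp
    have h2 : ‖v‖ ^ 2 = 1 := by exact_mod_cast h1
    nlinarith [norm_nonneg v]
  have hdense : DenseRange (fun c => Φ c v) := by
    have : DenseRange ((↑) : f.PreGNS → f.GNS) := UniformSpace.Completion.denseRange_coe
    intro x
    refine closure_mono ?_ (this x)
    rintro _ ⟨y, rfl⟩
    exact ⟨f.ofPreGNS y, hΦv _⟩
  refine ⟨f.GNS, inferInstance, inferInstance, inferInstance, Φ, v, hv1, hΦ1, hφv, ?_⟩
  intro S hS hinv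
  have : CompleteSpace S := hS.completeSpace_coe
  have hcomm := proj_comm Φ S hinv
  set p := S.starProjection v with hp
  have hpp : S.starProjection p = p :=
    Submodule.starProjection_eq_self_iff.2 (Submodule.starProjection_apply_mem _ _)
  have hq : v - p ∈ Sᗮ := Submodule.sub_starProjection_mem_orthogonal v
  by_cases hp0 : p = 0
  · left
    rw [Submodule.eq_bot_iff]
    intro x hx
    rw [← Submodule.starProjection_eq_self_iff.2 hx]
    have hc : IsClosed {x | S.starProjection x = 0} := isClosed_eq (by fun_prop) (by fun_prop)
    refine hc.closure_subset_iff.2 ?_ (hdense x)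
    rintro _ ⟨c, rfl⟩
    change S.starProjection (Φ c v) = 0
    rw [hcomm, ← hp, hp0, map_zero]
  by_cases hq0 : v - p = 0
  · right
    rw [Submodule.eq_top_iff']
    intro x
    refine hS.closure_subset_iff.2 ?_ (hdense x)
    rintro _ ⟨c, rfl⟩
    apply hinv
    rw [sub_eq_zero.1 hq0]
    exact Submodule.starProjection_apply_mem _ _
  exfalso
  have horth : ∀ c, ⟪p, Φ c (v - p)⟫_ℂ = 0 := fun c =>
    (Submodule.mem_orthogonal _ _).1 (orth_invt Φ S hinv c _ hq) p
      (Submodule.starProjection_apply_mem _ _)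
  have horth2 : ∀ c, ⟪v - p, Φ c p⟫_ℂ = 0 := fun c =>
    (Submodule.mem_orthogonal' _ _).1 hq _ (hinv c _ (Submodule.starProjection_apply_mem _ _))
  have hdec : ∀ c, ⟪v, Φ c v⟫_ℂ = ⟪p, Φ c p⟫_ℂ + ⟪v - p, Φ c (v - p)⟫_ℂ := by
    intro c
    have e : v = p + (v - p) := by abel
    conv_lhs => rw [e]
    rw [map_add, inner_add_left, inner_add_right, inner_add_right, horth, horth2, add_zero, zero_add]
  have hnorm : ‖p‖ ^ 2 + ‖v - p‖ ^ 2 = 1 := by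
    have := hdec 1
    rw [hΦ1] at this
    simp only [clm_one_apply, inner_self_eq_norm_sq_to_K] at this
    rw [hv1] at this
    have h2 : (1 : ℝ) ^ 2 = ‖p‖ ^ 2 + ‖v - p‖ ^ 2 := by exact_mod_cast this
    rw [← h2, one_pow]
  have hppos : 0 < ‖p‖ := norm_pos_iff.2 hp0
  have hqpos : 0 < ‖v - p‖ := norm_pos_iff.2 hq0
  have hp2 : ((‖p‖ ^ 2 : ℝ) : ℂ) ≠ 0 := by norm_cast; positivity
  have hq2 : ((‖v - p‖ ^ 2 : ℝ) : ℂ) ≠ 0 := by norm_cast; positivity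
  have heq := (hext _ (vecState_mem Φ hΦ1 p hp0) _ (vecState_mem Φ hΦ1 (v - p) hq0)
    ⟨‖p‖ ^ 2, ‖v - p‖ ^ 2, by positivity, by positivity, hnorm, by
      ext c
      rw [hφv, hdec]
      simp only [Pi.add_apply, Pi.smul_apply, Complex.real_smul]
      rw [mul_inv_cancel_left₀ hp2, mul_inv_cancel_left₀ hq2]⟩).1
  have hpv : p - ((‖p‖ ^ 2 : ℝ) : ℂ) • v = 0 := by
    apply hdense.eq_zero_of_inner_left (𝕜 := ℂ)
    intro c
    have h1 := congrFun heq c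
    have h2 : ⟪p, Φ c v⟫_ℂ = ⟪p, Φ c p⟫_ℂ := by
      have := horth c
      rw [map_sub, inner_sub_right, sub_eq_zero] at this
      exact this
    rw [inner_sub_left, inner_smul_left, Complex.conj_ofReal, h2, ← hφv, ← h1]
    beta_reduce
    rw [mul_inv_cancel_left₀ hp2, sub_self]
  have h3 := congrArg S.starProjection hpv
  rw [map_sub, map_smul, hpp, ← hp, map_zero, sub_eq_zero] at h3
  have h4 : (1 : ℂ) • p = ((‖p‖ ^ 2 : ℝ) : ℂ) • p := by rwa [one_smul]
  have h5 := smul_left_injective ℂ hp0 h4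
  have h6 : (1 : ℝ) = ‖p‖ ^ 2 := by exact_mod_cast h5
  nlinarith

end States

open scoped ComplexOrder InnerProductSpace
set_option linter.unusedSectionVars false
section Irr

variable {A : Type} [NonUnitalRing A] [Module ℂ A] [SMulCommClass ℂ A A]
  [IsScalarTower ℂ A A] [StarRing A] [StarModule ℂ A]
variable {X : Type} [NormedAddCommGroup X] [InnerProductSpace ℂ X] [CompleteSpace X]

theorem not_finiteDimensional_of_approx {K : Type} [NormedAddCommGroup K] [InnerProductSpace ℂ K]
    (v : K) (hv : ‖v‖ = 1)
    (h : ∀ n : ℕ, ∃ (u : ℕ → K) (L : ℕ → K →L[ℂ] K), ∀ i < n, ∀ k < n,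
      ‖L k (u i) - (if i = k then v else 0)‖ ≤ 1 / (2 * ((n : ℝ) + 1))) :
    ¬ FiniteDimensional ℂ K := by
  intro hfd
  set n := Module.finrank ℂ K + 1 with hn
  obtain ⟨u, L, hL⟩ := h n
  have hli : LinearIndependent ℂ (fun i : Fin n => u i) := by
    rw [Fintype.linearIndependent_iff]
    intro g hg
    have : Nonempty (Fin n) := ⟨⟨0, by omega⟩⟩
    obtain ⟨k, -, hk⟩ := Finset.exists_max_image Finset.univ (fun i => ‖g i‖) Finset.univ_nonempty
    have h1 : g k • v + ∑ i, g i • (L k (u i) - (if (i : ℕ) = k then v else 0)) = 0 := by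
      have h2 := congrArg (L k) hg
      rw [map_sum, map_zero] at h2
      simp only [map_smul] at h2
      simp only [smul_sub, Finset.sum_sub_distrib, h2]
      simp [← Fin.ext_iff]
    have h3 : ‖g k‖ ≤ ‖g k‖ / 2 := by
      have h4 : g k • v = - ∑ i, g i • (L k (u i) - (if (i : ℕ) = k then v else 0)) :=
        eq_neg_of_add_eq_zero_left h1
      have h5 : ‖g k‖ = ‖g k • v‖ := by rw [norm_smul, hv, mul_one]
      calc ‖g k‖ = ‖∑ i, g i • (L k (u i) - (if (i : ℕ) = k then v else 0))‖ := by
            rw [h5, h4, norm_neg]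
        _ ≤ ∑ i : Fin n, ‖g i • (L k (u i) - (if (i : ℕ) = k then v else 0))‖ := norm_sum_le _ _
        _ ≤ ∑ i : Fin n, ‖g k‖ * (1 / (2 * ((n : ℝ) + 1))) := by
          apply Finset.sum_le_sum
          intro i hi
          rw [norm_smul]
          exact mul_le_mul (hk i hi) (hL i i.2 k k.2) (norm_nonneg _) (norm_nonneg _)
        _ = ‖g k‖ * (n / (2 * ((n : ℝ) + 1))) := by
          rw [Finset.sum_const, Finset.card_univ, Fintype.card_fin, nsmul_eq_mul]; ring
        _ ≤ ‖g k‖ * (1 / 2) := by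
          refine mul_le_mul_of_nonneg_left ?_ (norm_nonneg _)
          rw [div_le_div_iff₀ (by positivity) (by positivity)]
          linarith
        _ = _ := by ring
    have h6 : ‖g k‖ ≤ 0 := by linarith
    intro i
    have := hk i (Finset.mem_univ _)
    exact norm_le_zero_iff.1 (this.trans h6)
  have := hli.fintype_card_le_finrank
  rw [Fintype.card_fin] at this
  omega

theorem sum_weights :
    ∑' p : ℕ × ℕ × ℕ, ((1 / 2 : ENNReal) ^ (p.1 + 1) * ((1 / 2) ^ (p.2.1 + 1) * (1 / 2) ^ (p.2.2 + 1)))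
      = 1 := by
  have h : ∑' n : ℕ, (1 / 2 : ENNReal) ^ (n + 1) = 1 := by
    rw [one_div, ENNReal.tsum_geometric_add_one, ENNReal.one_sub_inv_two, inv_inv]
    exact ENNReal.inv_mul_cancel (by simp) (by simp)
  rw [ENNReal.tsum_prod']
  simp only [ENNReal.tsum_mul_left]
  rw [ENNReal.tsum_mul_right, h, one_mul, ENNReal.tsum_prod']
  simp only [ENNReal.tsum_mul_left]
  rw [ENNReal.tsum_mul_right, h, one_mul]

/-- The spreading property gives an infinite dimensional irreducible representation. -/
theorem irr_lemma (τ : A →⋆ₙₐ[ℂ] (X →L[ℂ] X)) (v : X) (hv : v ≠ 0)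
    (h : ∀ (n : ℕ) (ε : ℝ), 0 < ε → ∃ a b : ℕ → A, ∀ i < n, ∀ k < n,
      ‖τ (a k) (τ (b i) v) - (if i = k then v else 0)‖ < ε) :
    ∃ (K : Type) (_ : NormedAddCommGroup K) (_ : InnerProductSpace ℂ K) (_ : CompleteSpace K)
      (Φ : A →⋆ₙₐ[ℂ] (K →L[ℂ] K)), IsTopIrredRep Φ ∧ ¬ FiniteDimensional ℂ K := by
  let C : StarSubalgebra ℂ (X →L[ℂ] X) := (Unitization.starLift τ).range.topologicalClosure
  have hCc : IsClosed (C : Set (X →L[ℂ] X)) := StarSubalgebra.isClosed_topologicalClosure _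
  let _ : CStarAlgebra C := StarSubalgebra.cstarAlgebra C (h_closed := hCc)
  have hmem : ∀ a, τ a ∈ C := fun a =>
    StarSubalgebra.le_topologicalClosure _ ⟨(a : Unitization ℂ A), by simp⟩
  let j : A →⋆ₙₐ[ℂ] C :=
    { toFun := fun a => ⟨τ a, hmem a⟩
      map_smul' := fun c a => Subtype.ext (by simp)
      map_zero' := Subtype.ext (by simp)
      map_add' := fun a b => Subtype.ext (by simp)
      map_mul' := fun a b => Subtype.ext (by simp)
      map_star' := fun a => Subtype.ext (map_star τ a) }
  let inc : C →⋆ₙₐ[ℂ] (X →L[ℂ] X) := C.subtype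
  have hinc1 : inc 1 = 1 := rfl
  have hincj : ∀ a, inc (j a) = τ a := fun a => rfl
  let φ0 : C → ℂ := fun c => ((‖v‖ ^ 2 : ℝ) : ℂ)⁻¹ * ⟪v, inc c v⟫_ℂ
  have hφ0 : φ0 ∈ stateSet C := vecState_mem inc hinc1 v hv
  have hvpos : 0 < ‖v‖ := norm_pos_iff.2 hv
  let e : ℕ → ℝ := fun n => ‖v‖ * (1 / 2) ^ (2 * (n + 1)) / (2 * (n + 1))
  have he : ∀ n, 0 < e n := fun n => by simp only [e]; positivity
  choose a b hab using fun n => h n (e n) (he n)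
  let d : ℕ × ℕ × ℕ → C := fun p => if p.2.1 < p.1 ∧ p.2.2 < p.1 then
    ((2 * (p.1 + 1) : ℝ) : ℂ) • (j (a p.1 p.2.2) * j (b p.1 p.2.1) - if p.2.1 = p.2.2 then 1 else 0) else 0
  have hval : ∀ p, (φ0 (star (d p) * d p)).re = (‖v‖ ^ 2)⁻¹ * ‖inc (d p) v‖ ^ 2 := by
    intro p
    have : ⟪v, inc (star (d p) * d p) v⟫_ℂ = ((‖inc (d p) v‖ ^ 2 : ℝ) : ℂ) :=
      vecFn_star_mul_self inc v (d p)
    simp only [φ0]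
    rw [this, ← Complex.ofReal_inv, ← Complex.ofReal_mul, Complex.ofReal_re]
  have hsum : ∑' p, ENNReal.ofReal (φ0 (star (d p) * d p)).re ≤ 1 := by
    rw [← sum_weights]
    apply ENNReal.tsum_le_tsum
    rintro ⟨n, i, k⟩
    rw [hval]
    by_cases hik : i < n ∧ k < n
    · have hd : inc (d (n, i, k)) v = ((2 * (n + 1) : ℝ) : ℂ) •
          (τ (a n k) (τ (b n i) v) - if i = k then v else 0) := by
        simp only [d]
        rw [if_pos hik, map_smul]
        change ((2 * (n + 1) : ℝ) : ℂ) • (inc _ v) = _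
        congr 1
        split_ifs <;> simp [hincj, hinc1]
      have hlt := hab n i hik.1 k hik.2
      have h1 : ‖inc (d (n, i, k)) v‖ ≤ ‖v‖ * (1 / 2) ^ (2 * (n + 1)) := by
        rw [hd, norm_smul, Complex.norm_real, Real.norm_of_nonneg (by positivity)]
        calc _ ≤ (2 * ((n : ℝ) + 1)) * e n := by gcongr
          _ = _ := by simp only [e]; field_simp
      have h2 : (‖v‖ ^ 2)⁻¹ * ‖inc (d (n, i, k)) v‖ ^ 2 ≤
          (1 / 2) ^ (n + 1) * ((1 / 2) ^ (i + 1) * (1 / 2) ^ (k + 1)) := by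
        rw [inv_mul_le_iff₀ (by positivity)]
        calc _ ≤ (‖v‖ * (1 / 2) ^ (2 * (n + 1))) ^ 2 := by gcongr
          _ = ‖v‖ ^ 2 * (1 / 2) ^ (4 * (n + 1)) := by rw [mul_pow, ← pow_mul]; ring_nf
          _ ≤ _ := by
            rw [← pow_add, ← pow_add]
            gcongr ?_ * ?_
            apply pow_le_pow_of_le_one (by norm_num) (by norm_num)
            omega
      refine (ENNReal.ofReal_le_ofReal h2).trans (le_of_eq ?_)
      rw [ENNReal.ofReal_mul (by positivity), ENNReal.ofReal_mul (by positivity),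
        ENNReal.ofReal_pow (by positivity), ENNReal.ofReal_pow (by positivity),
        ENNReal.ofReal_pow (by positivity)]
      have : ENNReal.ofReal (1 / 2) = 1 / 2 := by
        rw [ENNReal.ofReal_div_of_pos (by norm_num)]; simp
      rw [this]
    · have hd : d (n, i, k) = 0 := by simp only [d]; rw [if_neg hik]
      rw [hd]
      simp
  obtain ⟨φ, hφ, hφsum⟩ := exists_extreme d φ0 hφ0 hsum
  obtain ⟨K, i1, i2, i3, Φ, w, hw, hΦ1, hφw, hirr⟩ := gns_extreme φ hφ
  refine ⟨K, i1, i2, i3, Φ.comp j, ⟨?_, ?_⟩, ?_⟩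
  · refine ⟨w, 0, ?_⟩
    rintro rfl
    simp at hw
  · intro S hS hinv
    apply hirr S hS
    intro c x hx
    have hcont : Continuous (fun c : C => Φ c x) := by
      have : Continuous Φ :=
        AddMonoidHomClass.continuous_of_bound Φ 1
          (fun c => by simpa using NonUnitalStarAlgHom.norm_apply_le Φ c)
      fun_prop
    have hcl : IsClosed {c : C | Φ c x ∈ S} := hS.preimage hcont
    have hdense : Dense {c : C | ∃ (z : ℂ) (a : A), c = z • 1 + j a} := by
      intro c
      rw [Metric.mem_closure_iff]
      intro ε hε
      have hc : (c : X →L[ℂ] X) ∈ closure ((Unitization.starLift τ).range : Set (X →L[ℂ] X)) := c.2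
      rw [Metric.mem_closure_iff] at hc
      obtain ⟨_, ⟨y, rfl⟩, hy⟩ := hc ε hε
      refine ⟨y.fst • 1 + j y.snd, ⟨_, _, rfl⟩, ?_⟩
      have : ((y.fst • 1 + j y.snd : C) : X →L[ℂ] X) = Unitization.starLift τ y := by
        simp [Algebra.algebraMap_eq_smul_one]
        rfl
      change dist (c : X →L[ℂ] X) _ < ε
      rw [this]
      exact hy
    refine hcl.closure_subset_iff.2 ?_ (hdense c)
    rintro _ ⟨z, a, rfl⟩
    change Φ (z • 1 + j a) x ∈ S
    rw [map_add, map_smul, hΦ1]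
    exact S.add_mem (S.smul_mem z hx) (hinv a x hx)
  · apply not_finiteDimensional_of_approx w hw
    intro n
    refine ⟨fun i => Φ (j (b n i)) w, fun k => Φ (j (a n k)), ?_⟩
    intro i hi k hk
    have h1 : ENNReal.ofReal (φ (star (d (n, i, k)) * d (n, i, k))).re ≤ 1 :=
      (ENNReal.le_tsum (n, i, k)).trans hφsum
    have h2 : (φ (star (d (n, i, k)) * d (n, i, k))).re = ‖Φ (d (n, i, k)) w‖ ^ 2 := by
      have : ⟪w, Φ (star (d (n, i, k)) * d (n, i, k)) w⟫_ℂ = ((‖Φ (d (n, i, k)) w‖ ^ 2 : ℝ) : ℂ) :=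
        vecFn_star_mul_self Φ w _
      rw [hφw, this, Complex.ofReal_re]
    rw [h2] at h1
    have h3 : ‖Φ (d (n, i, k)) w‖ ^ 2 ≤ 1 := by
      rwa [ENNReal.ofReal_le_one] at h1
    have h4 : ‖Φ (d (n, i, k)) w‖ ≤ 1 := by
      nlinarith [norm_nonneg (Φ (d (n, i, k)) w)]
    have hd : Φ (d (n, i, k)) w = ((2 * (n + 1) : ℝ) : ℂ) •
        (Φ (j (a n k)) (Φ (j (b n i)) w) - if i = k then w else 0) := by
      simp only [d]
      rw [if_pos ⟨hi, hk⟩, map_smul]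
      change ((2 * (n + 1) : ℝ) : ℂ) • (Φ _ w) = _
      congr 1
      split_ifs <;> simp [hΦ1]
    rw [hd, norm_smul, Complex.norm_real, Real.norm_of_nonneg (by positivity)] at h4
    rw [le_div_iff₀ (by positivity), mul_comm]
    exact h4

end Irr

open scoped ComplexOrder InnerProductSpace
set_option linter.unusedSectionVars false
section Bwd

variable {A : Type} [NonUnitalRing A] [Module ℂ A] [SMulCommClass ℂ A A]
  [IsScalarTower ℂ A A] [StarRing A] [StarModule ℂ A]

/-- Finite dimensional irreducible representations force uniqueness. -/
theorem unique_of_finiteDimensional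
    (hfin : ∀ (H : Type) [NormedAddCommGroup H] [InnerProductSpace ℂ H] [CompleteSpace H]
        (π : A →⋆ₙₐ[ℂ] (H →L[ℂ] H)), IsTopIrredRep π → FiniteDimensional ℂ H) :
    LebDecompUniqueR A := by
  intro f g hf _ hg _ fr fs fr' fs' hd hd'
  obtain ⟨G, _, _, _, π, η, hη, rfl⟩ := hg.exists_vec
  obtain ⟨F, _, _, _, σ, ξ, hξ, hfe⟩ := hf.exists_vec
  have key : ∀ fr fs, IsLebDecompR f (vecFn π η) fr fs →
      ∀ a, fr a = ⟪ξ, (mulPart π η σ ξ)ᗮ.starProjection (σ a ξ)⟫_ℂ := by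
    intro fr fs hd
    obtain ⟨h1, _, h2, _, h3, h4, h5⟩ := hd
    obtain ⟨X, _, _, _, ρ, ξr, hξr, rfl⟩ := h1.exists_vec
    obtain ⟨X', _, _, _, τ, ξs, hξs, rfl⟩ := h2.exists_vec
    rcases leb_formula π η hη σ ξ hξ ρ ξr hξr τ ξs hξs (hfe.symm.trans h3) h4 h5 with h | h
    · exact h
    · obtain ⟨v, hv, hv2⟩ := h
      obtain ⟨K, _, _, _, Φ, hΦ, hK⟩ := irr_lemma τ v hv hv2
      exact absurd (hfin K Φ hΦ) hK
  have e1 : fr = fr' := LinearMap.ext fun a => (key _ _ hd a).trans (key _ _ hd' a).symm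
  refine ⟨e1, ?_⟩
  have := hd.2.2.2.2.1.symm.trans hd'.2.2.2.2.1
  rw [e1] at this
  exact add_left_cancel this

end Bwd

open scoped ComplexOrder InnerProductSpace
set_option linter.unusedSectionVars false
section Schur

variable {A : Type} [NonUnitalRing A] [Module ℂ A] [SMulCommClass ℂ A A]
  [IsScalarTower ℂ A A] [StarRing A] [StarModule ℂ A]
variable {H : Type} [NormedAddCommGroup H] [InnerProductSpace ℂ H] [CompleteSpace H]

theorem schur_sa (π : A →⋆ₙₐ[ℂ] (H →L[ℂ] H)) (hπ : IsTopIrredRep π) (T : H →L[ℂ] H)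
    (hs : IsSelfAdjoint T) (hT : ∀ a, Commute T (π a)) : ∃ c : ℝ, T = algebraMap ℝ _ c := by
  have hnt := hπ.1
  have hsub : (spectrum ℝ T).Subsingleton := by
    have key : ∀ s ∈ spectrum ℝ T, ∀ t ∈ spectrum ℝ T, ¬ s < t := by
      intro s hs' t ht' hst
      let f : ℝ → ℝ := fun x => max ((s + t) / 2 - x) 0
      let g : ℝ → ℝ := fun x => max (x - (s + t) / 2) 0
      have hf : Continuous f := by fun_prop
      have hg : Continuous g := by fun_prop
      have hfg : cfc f T * cfc g T = 0 := by
        rw [← cfc_mul f g T hf.continuousOn hg.continuousOn]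
        have : (fun x => f x * g x) = fun _ => 0 := by
          funext x
          simp only [f, g]
          rcases le_total x ((s + t) / 2) with h | h
          · rw [max_eq_right (a := x - (s + t) / 2) (by linarith), mul_zero]
          · rw [max_eq_right (a := (s + t) / 2 - x) (by linarith), zero_mul]
        rw [this]
        simp
      have hne : ∀ (k : ℝ → ℝ), Continuous k → ∀ r ∈ spectrum ℝ T, k r ≠ 0 → cfc k T ≠ 0 := by
        intro k hk r hr hkr h0
        have h1 := cfc_map_spectrum k T hs hk.continuousOn
        have h2 : k r ∈ spectrum ℝ (cfc k T) := by rw [h1]; exact ⟨r, hr, rfl⟩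
        rw [h0, spectrum.zero_eq] at h2
        exact hkr h2
      have hf0 : cfc f T ≠ 0 := hne f hf s hs' (by
        simp only [f]; exact (lt_max_of_lt_left (by linarith)).ne')
      have hg0 : cfc g T ≠ 0 := hne g hg t ht' (by
        simp only [g]; exact (lt_max_of_lt_left (by linarith)).ne')
      rcases hπ.2 (LinearMap.ker (cfc f T).toLinearMap) (cfc f T).isClosed_ker (by
        intro a x hx
        have hc : Commute (cfc f T) (π a) := (hs.commute_cfc (hT a) f)
        have h2 := DFunLike.congr_fun hc.eq x
        change cfc f T (π a x) = 0
        change cfc f T (π a x) = π a (cfc f T x) at h2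
        have hx' : cfc f T x = 0 := hx
        rw [h2, hx', map_zero]) with h | h
      · apply hg0
        ext x
        have h2 : cfc g T x ∈ LinearMap.ker (cfc f T).toLinearMap := DFunLike.congr_fun hfg x
        rw [h] at h2
        exact h2
      · apply hf0
        ext x
        have h2 : x ∈ LinearMap.ker (cfc f T).toLinearMap := by rw [h]; trivial
        exact h2
    intro s hs' t ht'
    exact le_antisymm (not_lt.1 (key t ht' s hs')) (not_lt.1 (key s hs' t ht'))
  rcases hsub.eq_empty_or_singleton with h | ⟨c, h⟩
  · exact ⟨0, CFC.eq_algebraMap_of_spectrum_subset_singleton T 0 (by rw [h]; simp)⟩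
  · exact ⟨c, CFC.eq_algebraMap_of_spectrum_subset_singleton T c (by rw [h])⟩

theorem schur (π : A →⋆ₙₐ[ℂ] (H →L[ℂ] H)) (hπ : IsTopIrredRep π) (T : H →L[ℂ] H)
    (hT : ∀ a x, T (π a x) = π a (T x)) : ∃ c : ℂ, ∀ x, T x = c • x := by
  have h1 : ∀ a, Commute T (π a) := fun a => ContinuousLinearMap.ext (hT a)
  have h2 : ∀ a, Commute (star T) (π a) := fun a => by
    have := (h1 (star a)).star_star
    rwa [map_star, star_star] at this
  obtain ⟨c, hc⟩ := schur_sa π hπ (T + star T) (IsSelfAdjoint.add_star_self T)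
    (fun a => (h1 a).add_left (h2 a))
  obtain ⟨d, hd⟩ := schur_sa π hπ (Complex.I • (T - star T)) (by
      rw [isSelfAdjoint_iff, star_smul, star_sub, star_star, Complex.star_def, Complex.conj_I,
        neg_smul, ← smul_neg, neg_sub])
    (fun a => ((h1 a).sub_left (h2 a)).smul_left _)
  refine ⟨((c : ℂ) - Complex.I * d) / 2, fun x => ?_⟩
  have e1 : T x + star T x = (c : ℂ) • x := by
    have := DFunLike.congr_fun hc x
    simpa [Algebra.algebraMap_eq_smul_one] using this
  have e2 : Complex.I • (T x - star T x) = (d : ℂ) • x := by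
    have := DFunLike.congr_fun hd x
    simpa [Algebra.algebraMap_eq_smul_one] using this
  have e3 : T x - star T x = - ((Complex.I * d) • x) := by
    rw [mul_smul, ← e2, smul_smul, Complex.I_mul_I]; simp
  have e4 : (2 : ℂ) • T x = ((c : ℂ) - Complex.I * d) • x := by
    rw [sub_smul, ← e1, sub_eq_add_neg, ← e3, two_smul]; abel
  rw [div_eq_inv_mul, mul_smul, ← e4, smul_smul]
  norm_num

end Schur

open scoped ComplexOrder InnerProductSpace
set_option linter.unusedSectionVars false
section Ell

variable {A : Type} [NonUnitalRing A] [Module ℂ A] [SMulCommClass ℂ A A]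
  [IsScalarTower ℂ A A] [StarRing A] [StarModule ℂ A]
variable {H : Type} [NormedAddCommGroup H] [InnerProductSpace ℂ H] [CompleteSpace H]

/-- Square summable sequences in `H`. -/
abbrev Ell (H : Type) [NormedAddCommGroup H] : Type := lp (fun _ : ℕ => H) 2

theorem ell_hasSum_norm (f : Ell H) : HasSum (fun n => ‖f n‖ ^ 2) (‖f‖ ^ 2) := by
  have := lp.hasSum_norm (p := 2) (by norm_num) f
  simpa using this

/-- Coordinatewise action of an operator. -/
noncomputable def ellOp (T : H →L[ℂ] H) : Ell H →L[ℂ] Ell H :=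
  LinearMap.mkContinuous
    { toFun := fun f => ⟨fun n => T (f n), by
        have h := (lp.memℓp f).norm.const_mul ‖T‖
        exact h.mono (fun n => T.le_opNorm (f n))⟩
      map_add' := fun f g => by ext n; exact map_add T _ _
      map_smul' := fun c f => by ext n; simp } ‖T‖ (by
    intro f
    rw [← sq_le_sq₀ (norm_nonneg _) (by positivity), mul_pow]
    refine hasSum_le ?_ (ell_hasSum_norm _) ((ell_hasSum_norm f).mul_left (‖T‖ ^ 2))
    intro n
    rw [← mul_pow]
    exact pow_le_pow_left₀ (norm_nonneg _) (T.le_opNorm (f n)) 2)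

@[simp] theorem ellOp_apply (T : H →L[ℂ] H) (f : Ell H) (n : ℕ) : ellOp T f n = T (f n) := rfl

/-- Coordinatewise representation. -/
noncomputable def ellRep (π : A →⋆ₙₐ[ℂ] (H →L[ℂ] H)) : A →⋆ₙₐ[ℂ] (Ell H →L[ℂ] Ell H) where
  toFun a := ellOp (π a)
  map_smul' c a := by ext f n; simp
  map_zero' := by ext f n; simp
  map_add' a b := by ext f n; simp
  map_mul' a b := by ext f n; simp
  map_star' a := by
    rw [ContinuousLinearMap.star_eq_adjoint, ContinuousLinearMap.eq_adjoint_iff]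
    intro x y
    rw [lp.inner_eq_tsum, lp.inner_eq_tsum]
    congr 1
    funext n
    rw [ellOp_apply, ellOp_apply, rep_inner_left, star_star]

@[simp] theorem ellRep_apply (π : A →⋆ₙₐ[ℂ] (H →L[ℂ] H)) (a : A) (f : Ell H) (n : ℕ) :
    ellRep π a f n = π a (f n) := rfl

theorem ellRep_single (π : A →⋆ₙₐ[ℂ] (H →L[ℂ] H)) (a : A) (n : ℕ) (x : H) :
    ellRep π a (lp.single 2 n x) = lp.single 2 n (π a x) := by
  ext k
  rw [ellRep_apply, lp.single_apply, lp.single_apply]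
  by_cases h : k = n
  · subst h; simp
  · rw [Pi.single_eq_of_ne h, Pi.single_eq_of_ne h, map_zero]

/-- Singularity in the counterexample. -/
theorem ell_singular (π : A →⋆ₙₐ[ℂ] (H →L[ℂ] H)) (hπ : IsTopIrredRep π) (z : Ell H)
    (x : H) (hx : HasSum (fun n => z n) x)
    (hz2 : ∀ (l : ℕ → ℂ), HasSum (fun n => l n • z n) 0 → ∀ n, l n = 0)
    : SingularR (vecFn π x) (vecFn (ellRep π) z) := by
  intro p hp _ hp1 hp2
  obtain ⟨P, _, _, _, ρ, ξ, hξ, rfl⟩ := hp.exists_vec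
  rw [fnLE_vecFn_iff'] at hp1 hp2
  obtain ⟨J, hJ1, hJ2, -⟩ := exists_intertwiner π x ρ ξ hξ 1 (by norm_num)
    (by simpa using hp1)
  obtain ⟨J', hJ'1, hJ'2, -⟩ := exists_intertwiner (ellRep π) z ρ ξ hξ 1 (by norm_num)
    (by simpa using hp2)
  have hadj : ∀ a y, J.adjoint (ρ a y) = π a (J.adjoint y) := by
    intro a y
    apply ext_inner_right ℂ
    intro w
    rw [ContinuousLinearMap.adjoint_inner_left, rep_inner_left, ← hJ1,
      rep_inner_left, ContinuousLinearMap.adjoint_inner_left]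
  obtain ⟨t, ht⟩ := schur π hπ (J.adjoint.comp J) (fun a y => by
    change J.adjoint (J _) = π a (J.adjoint (J y))
    rw [hJ1, hadj])
  have ht' : ∀ y, J.adjoint (J y) = t • y := ht
  let L : Ell H →L[ℂ] H := J.adjoint.comp J'
  have hL : ∀ a y, L (ellRep π a y) = π a (L y) := fun a y => by
    change J.adjoint (J' _) = π a (J.adjoint (J' y))
    rw [hJ'1, hadj]
  have hLz : L z = t • x := by
    change J.adjoint (J' z) = _
    rw [hJ'2, ← hJ2, ht']
  have hl : ∀ n : ℕ, ∃ c : ℂ, ∀ y, L (lp.single 2 n y) = c • y := fun n =>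
    schur π hπ (L.comp (lp.singleContinuousLinearMap ℂ (fun _ : ℕ => H) 2 n)) (fun a y => by
      change L (lp.single 2 n (π a y)) = π a (L (lp.single 2 n y))
      rw [← ellRep_single, hL])
  choose l hl using hl
  have hs : HasSum (fun n => l n • z n) (t • x) := by
    rw [← hLz]
    have := (lp.hasSum_single (p := 2) (by norm_num) z).mapL L
    simpa only [hl] using this
  have hlt : ∀ n, l n = t := by
    intro n
    have h1 := hs.sub (hx.const_smul t)
    simp only [← sub_smul, sub_self] at h1
    exact sub_eq_zero.1 (hz2 _ h1 n)
  have ht0 : t = 0 := by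
    obtain ⟨e0, he0⟩ := @exists_ne H hπ.1 0
    by_contra htn
    have hb : ∀ N : ℕ, (N : ℝ) * (‖t‖ ^ 2 * ‖e0‖ ^ 2) ≤ ‖L‖ ^ 2 * ‖e0‖ ^ 2 := by
      intro N
      rcases Nat.eq_zero_or_pos N with rfl | hN
      · simp; positivity
      have h1 := L.le_opNorm (∑ n ∈ Finset.range N, lp.single 2 n e0)
      have h2 : L (∑ n ∈ Finset.range N, lp.single 2 n e0) = ((N : ℂ) * t) • e0 := by
        rw [map_sum]
        simp [hl, hlt, mul_smul, ← Nat.cast_smul_eq_nsmul ℂ]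
      have h3 : ‖∑ n ∈ Finset.range N, lp.single (E := fun _ : ℕ => H) 2 n e0‖ ^ 2 = N * ‖e0‖ ^ 2 := by
        have := lp.norm_sum_single (E := fun _ : ℕ => H) (p := 2) (by norm_num) (fun _ => e0)
          (Finset.range N)
        simpa using this
      rw [h2] at h1
      have h4 := pow_le_pow_left₀ (norm_nonneg _) h1 2
      rw [mul_pow, h3, norm_smul, norm_mul, Complex.norm_natCast] at h4
      have hN' : (0 : ℝ) < N := by exact_mod_cast hN
      have h5 : (N : ℝ) * (N * (‖t‖ ^ 2 * ‖e0‖ ^ 2)) ≤ N * (‖L‖ ^ 2 * ‖e0‖ ^ 2) := by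
        nlinarith
      exact le_of_mul_le_mul_left h5 hN'
    have hpos : 0 < ‖t‖ ^ 2 * ‖e0‖ ^ 2 := by
      have := norm_pos_iff.2 htn
      have := norm_pos_iff.2 he0
      positivity
    obtain ⟨N, hN⟩ := exists_nat_gt (‖L‖ ^ 2 * ‖e0‖ ^ 2 / (‖t‖ ^ 2 * ‖e0‖ ^ 2))
    rw [div_lt_iff₀ hpos] at hN
    exact absurd (hb N) (not_le.2 hN)
  have hξ0 : ξ = 0 := by
    have h1 : ⟪J x, J x⟫_ℂ = 0 := by
      rw [← ContinuousLinearMap.adjoint_inner_left, ht', ht0, zero_smul, inner_zero_left]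
    rw [← hJ2]
    exact inner_self_eq_zero.1 h1
  ext a
  rw [vecFn_apply, hξ0]
  simp

end Ell

open scoped ComplexOrder InnerProductSpace
set_option linter.unusedSectionVars false
section Fwd

variable {A : Type} [NonUnitalRing A] [Module ℂ A] [SMulCommClass ℂ A A]
  [IsScalarTower ℂ A A] [StarRing A] [StarModule ℂ A]
variable {H : Type} [NormedAddCommGroup H] [InnerProductSpace ℂ H] [CompleteSpace H]

theorem exists_orthonormal_seq (h : ¬ FiniteDimensional ℂ H) : ∃ e : ℕ → H, Orthonormal ℂ e := by
  let b := Module.Basis.ofVectorSpace ℂ H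
  have hinf : Infinite (Module.Basis.ofVectorSpaceIndex ℂ H) := by
    by_contra hfin
    rw [not_infinite_iff_finite] at hfin
    exact h (Module.Finite.of_basis b)
  have hli := b.linearIndependent.comp _ (Infinite.natEmbedding _).injective
  exact ⟨_, InnerProductSpace.gramSchmidtNormed_orthonormal hli⟩

/-- Geometric sequence along an orthonormal sequence. -/
noncomputable def geo (e : ℕ → H) (he : Orthonormal ℂ e) (r : ℝ) (h0 : 0 ≤ r) (h1 : r < 1) : Ell H :=
  ⟨fun n => ((r ^ n : ℝ) : ℂ) • e n, by
    apply memℓp_gen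
    have : ∀ n : ℕ, ‖((r ^ n : ℝ) : ℂ) • e n‖ ^ (2 : ENNReal).toReal = (r ^ 2) ^ n := by
      intro n
      rw [norm_smul, he.1 n, Complex.norm_real, Real.norm_of_nonneg (by positivity), mul_one]
      simp [← pow_mul, mul_comm]
    simp_rw [this]
    exact summable_geometric_of_lt_one (by positivity) (by nlinarith)⟩

/-- Truncation. -/
noncomputable def trunc (y : Ell H) (N : ℕ) : Ell H := ∑ n ∈ Finset.range N, lp.single 2 n (y n)

theorem norm_trunc (π : A →⋆ₙₐ[ℂ] (H →L[ℂ] H)) (y : Ell H) (N : ℕ) (a : A) :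
    ‖ellRep π a (trunc y N)‖ ^ 2 = ∑ n ∈ Finset.range N, ‖π a (y n)‖ ^ 2 := by
  unfold trunc
  rw [map_sum]
  simp only [ellRep_single]
  have := lp.norm_sum_single (E := fun _ : ℕ => H) (p := 2) (by norm_num) (fun n => π a (y n))
    (Finset.range N)
  simpa using this

theorem tendsto_trunc (y : Ell H) : Filter.Tendsto (trunc y) Filter.atTop (nhds y) :=
  (lp.hasSum_single (p := 2) (by norm_num) y).tendsto_sum_nat

theorem tendsto_vecFn {K : Type} [NormedAddCommGroup K] [InnerProductSpace ℂ K] [CompleteSpace K]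
    (π : A →⋆ₙₐ[ℂ] (K →L[ℂ] K)) (w : ℕ → K) (y : K)
    (h : Filter.Tendsto w Filter.atTop (nhds y)) (a : A) :
    Filter.Tendsto (fun n => vecFn π (w n) a) Filter.atTop (nhds (vecFn π y a)) := by
  simp only [vecFn_apply]
  exact h.inner (((π a).continuous.tendsto y).comp h)

theorem sum_le_norm (π : A →⋆ₙₐ[ℂ] (H →L[ℂ] H)) (z : Ell H) (N : ℕ) (a : A) :
    ∑ n ∈ Finset.range N, ‖π a (z n)‖ ^ 2 ≤ ‖ellRep π a z‖ ^ 2 :=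
  sum_le_hasSum _ (fun _ _ => by positivity) (ell_hasSum_norm (ellRep π a z))

/-- The convergence factors. -/
noncomputable def sfac (N : ℕ) : ℝ := (1 + 4 / 3 * (1 / 4) ^ N)⁻¹

theorem sfac_pos (N : ℕ) : 0 < sfac N := by unfold sfac; positivity

theorem sfac_le (N : ℕ) : sfac N ≤ 1 := by
  unfold sfac
  apply inv_le_one_of_one_le₀
  have : (0 : ℝ) ≤ 4 / 3 * (1 / 4) ^ N := by positivity
  linarith

theorem sfac_tendsto : Filter.Tendsto sfac Filter.atTop (nhds 1) := by
  have h : Filter.Tendsto (fun N : ℕ => 1 + 4 / 3 * (1 / 4 : ℝ) ^ N) Filter.atTop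
      (nhds (1 + 4 / 3 * 0)) :=
    ((tendsto_pow_atTop_nhds_zero_of_lt_one (by norm_num) (by norm_num)).const_mul _).const_add _
  have := h.inv₀ (by norm_num)
  rw [mul_zero, add_zero, inv_one] at this
  exact this

theorem sfac_ineq (N : ℕ) (u v : H) :
    sfac N * ‖u‖ ^ 2 ≤ (1 / 4) ^ N * ‖v‖ ^ 2 + sfac (N + 1) * ‖u + (((1 / 4 : ℝ) ^ N : ℝ) : ℂ) • v‖ ^ 2 := by
  set q : ℝ := (1 / 4) ^ N with hq
  have hqp : 0 < q := by positivity
  have h1 : ‖u‖ ≤ ‖u + (q : ℂ) • v‖ + q * ‖v‖ := by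
    have := norm_sub_le (u + (q : ℂ) • v) ((q : ℂ) • v)
    rw [add_sub_cancel_right, norm_smul, Complex.norm_real, Real.norm_of_nonneg hqp.le] at this
    exact this
  set p := ‖u + (q : ℂ) • v‖
  set w := ‖v‖
  set s := sfac (N + 1) with hs
  have hsp : 0 < s := sfac_pos _
  have h2 : sfac N = (s⁻¹ + q)⁻¹ := by
    rw [hs]; unfold sfac; rw [inv_inv, hq, pow_succ]; congr 1; ring
  rw [h2, inv_mul_le_iff₀ (by positivity)]
  have h3 : ‖u‖ ^ 2 ≤ (p + q * w) ^ 2 := pow_le_pow_left₀ (norm_nonneg _) h1 2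
  refine h3.trans ?_
  have h4 : (s⁻¹ + q) * (q * w ^ 2 + s * p ^ 2) - (p + q * w) ^ 2 = q * s⁻¹ * (w - s * p) ^ 2 := by
    field_simp
    ring
  have : 0 ≤ q * s⁻¹ * (w - s * p) ^ 2 := by positivity
  linarith

theorem finiteDimensional_of_unique (huniq : LebDecompUniqueR A)
    (π : A →⋆ₙₐ[ℂ] (H →L[ℂ] H)) (hπ : IsTopIrredRep π) : FiniteDimensional ℂ H := by
  by_contra hfd
  obtain ⟨e, he⟩ := exists_orthonormal_seq hfd
  let z : Ell H := geo e he (1 / 4) (by norm_num) (by norm_num)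
  let y : Ell H := geo e he (1 / 2) (by norm_num) (by norm_num)
  have hz : ∀ n, z n = (((1 / 4 : ℝ) ^ n : ℝ) : ℂ) • e n := fun n => rfl
  have hy : ∀ n, y n = (((1 / 2 : ℝ) ^ n : ℝ) : ℂ) • e n := fun n => rfl
  have hsumm : Summable (fun n => z n) := by
    apply Summable.of_norm
    have : ∀ n, ‖z n‖ = (1 / 4) ^ n := fun n => by
      rw [hz, norm_smul, he.1 n, Complex.norm_real, Real.norm_of_nonneg (by positivity), mul_one]
    simp_rw [this]
    exact summable_geometric_of_lt_one (by norm_num) (by norm_num)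
  obtain ⟨x, hx⟩ := hsumm
  have hz2 : ∀ (l : ℕ → ℂ), HasSum (fun n => l n • z n) 0 → ∀ n, l n = 0 := by
    intro l hl m
    have h1 := hl.mapL (innerSL ℂ (e m))
    have h2 : HasSum (fun n => innerSL ℂ (e m) (l n • z n)) (l m * (((1 / 4 : ℝ) ^ m : ℝ) : ℂ)) := by
      have : ∀ n, innerSL ℂ (e m) (l n • z n) = if n = m then l m * (((1 / 4 : ℝ) ^ m : ℝ) : ℂ) else 0 := by
        intro n
        rw [hz, map_smul, map_smul, innerSL_apply_apply, orthonormal_iff_ite.1 he]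
        by_cases hnm : n = m
        · subst hnm; simp
        · rw [if_neg hnm, if_neg (Ne.symm hnm)]; simp
      simp_rw [this]
      exact hasSum_ite_eq m _
    have h3 := h2.unique h1
    rw [map_zero] at h3
    rcases mul_eq_zero.1 h3 with h | h
    · exact h
    · exfalso
      have : ((1 / 4 : ℝ) ^ m) ≠ 0 := by positivity
      exact this (by exact_mod_cast h)
  have hx0 : x ≠ 0 := by
    rintro rfl
    have := hz2 (fun _ => 1) (by simpa using hx) 0
    exact one_ne_zero this
  let g := vecFn (ellRep π) z
  let k := vecFn (ellRep π) y
  let h := vecFn π x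
  let xN : ℕ → H := fun N => ∑ n ∈ Finset.range N, z n
  have hxN : Filter.Tendsto xN Filter.atTop (nhds x) := hx.tendsto_sum_nat
  let kN : ℕ → (A →ₗ[ℂ] ℂ) := fun N => vecFn (ellRep π) (trunc y N)
  let hN : ℕ → (A →ₗ[ℂ] ℂ) := fun N => (sfac N : ℂ) • vecFn π (xN N)
  -- basic estimates
  have hys : ∀ a n, ‖π a (y n)‖ ^ 2 = (1 / 4) ^ n * ‖π a (e n)‖ ^ 2 := by
    intro a n
    rw [hy, map_smul, norm_smul, Complex.norm_real, Real.norm_of_nonneg (by positivity), mul_pow,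
      ← pow_mul, mul_comm n 2, pow_mul]
    norm_num
  have hyz : ∀ a n, ‖π a (y n)‖ ^ 2 = 4 ^ n * ‖π a (z n)‖ ^ 2 := by
    intro a n
    rw [hys, hz, map_smul, norm_smul, Complex.norm_real, Real.norm_of_nonneg (by positivity),
      mul_pow, ← pow_mul, mul_comm n 2, pow_mul, ← mul_assoc, ← mul_pow]
    norm_num
  have hk_le : ∀ N a, ‖ellRep π a (trunc y N)‖ ^ 2 ≤ 4 ^ N * ‖ellRep π a z‖ ^ 2 := by
    intro N a
    rw [norm_trunc]
    calc _ ≤ ∑ n ∈ Finset.range N, 4 ^ N * ‖π a (z n)‖ ^ 2 := by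
          apply Finset.sum_le_sum
          intro n hn
          rw [hyz]
          have := (Finset.mem_range.1 hn).le
          gcongr
          norm_num
      _ = 4 ^ N * ∑ n ∈ Finset.range N, ‖π a (z n)‖ ^ 2 := by rw [Finset.mul_sum]
      _ ≤ _ := by
        gcongr
        exact sum_le_norm π z N a
  have hk_succ : ∀ N a, ‖ellRep π a (trunc y (N + 1))‖ ^ 2 =
      ‖ellRep π a (trunc y N)‖ ^ 2 + (1 / 4) ^ N * ‖π a (e N)‖ ^ 2 := by
    intro N a
    rw [norm_trunc, norm_trunc, Finset.sum_range_succ, hys]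
  have hx_le : ∀ N a, ‖π a (xN N)‖ ^ 2 ≤ N * ‖ellRep π a z‖ ^ 2 := by
    intro N a
    simp only [xN]
    rw [map_sum]
    calc _ ≤ (∑ n ∈ Finset.range N, ‖π a (z n)‖) ^ 2 :=
          pow_le_pow_left₀ (norm_nonneg _) (norm_sum_le _ _) 2
      _ ≤ N * ∑ n ∈ Finset.range N, ‖π a (z n)‖ ^ 2 := by
        have := sq_sum_le_card_mul_sum_sq (s := Finset.range N) (f := fun n => ‖π a (z n)‖)
        simpa using this
      _ ≤ _ := by
        gcongr
        exact sum_le_norm π z N a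
  -- absolute continuity
  have hk_ac : AbsContR k g := by
    refine ⟨kN, fun N => 4 ^ N, fun N => ⟨vecFn_representable _ _, vecFn_pos _ _⟩,
      fun N => by positivity, fun N => ?_, fun N => ?_, fun a => ?_⟩
    · rw [fnLE_vecFn_iff']
      intro a
      rw [hk_succ]
      have : 0 ≤ (1 / 4 : ℝ) ^ N * ‖π a (e N)‖ ^ 2 := by positivity
      linarith
    · rw [fnLE_vecFn_iff]
      exact hk_le N
    · exact tendsto_vecFn _ _ _ (tendsto_trunc y) a
  have hf_ac : AbsContR (k + h) g := by
    have hrep : ∀ N, IsRepresentable (kN N + hN N) := fun N =>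
      (vecFn_representable _ _).add ((vecFn_representable _ _).smul _ (sfac_pos N).le)
    have hval : ∀ N a, (kN N + hN N) (star a * a) =
        ((‖ellRep π a (trunc y N)‖ ^ 2 + sfac N * ‖π a (xN N)‖ ^ 2 : ℝ) : ℂ) := by
      intro N a
      simp only [kN, hN]
      rw [LinearMap.add_apply, LinearMap.smul_apply, vecFn_star_mul_self, vecFn_star_mul_self,
        smul_eq_mul, ← Complex.ofReal_mul, ← Complex.ofReal_add]
    refine ⟨fun N => kN N + hN N, fun N => 4 ^ N + N, fun N => ⟨hrep N, (hrep N).pos⟩,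
      fun N => by positivity, fun N => ?_, fun N => ?_, fun a => ?_⟩
    · intro a
      rw [LinearMap.sub_apply, hval, hval, ← Complex.ofReal_sub, Complex.zero_le_real, sub_nonneg,
        hk_succ]
      have h1 := sfac_ineq N (π a (xN N)) (π a (e N))
      have h2 : xN (N + 1) = xN N + (((1 / 4 : ℝ) ^ N : ℝ) : ℂ) • e N := by
        simp only [xN]
        rw [Finset.sum_range_succ, hz]
      rw [h2, map_add, map_smul]
      linarith
    · intro a
      rw [LinearMap.sub_apply, hval, LinearMap.smul_apply, vecFn_star_mul_self, smul_eq_mul,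
        ← Complex.ofReal_mul, ← Complex.ofReal_sub, Complex.zero_le_real, sub_nonneg]
      have h1 := hk_le N a
      have h2 := hx_le N a
      have h3 : sfac N * ‖π a (xN N)‖ ^ 2 ≤ 1 * ‖π a (xN N)‖ ^ 2 := by
        gcongr
        exact sfac_le N
      linarith
    · have h1 : Filter.Tendsto (fun N => kN N a) Filter.atTop (nhds (k a)) :=
        tendsto_vecFn _ _ _ (tendsto_trunc y) a
      have h2 : Filter.Tendsto (fun N => vecFn π (xN N) a) Filter.atTop (nhds (h a)) :=
        tendsto_vecFn _ _ _ hxN a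
      have h3 : Filter.Tendsto (fun N => (sfac N : ℂ)) Filter.atTop (nhds ((1 : ℝ) : ℂ)) :=
        (Complex.continuous_ofReal.tendsto 1).comp sfac_tendsto
      have := h1.add (h3.mul h2)
      rw [Complex.ofReal_one, one_mul] at this
      exact this
  have hh_sing : SingularR h g := ell_singular π hπ z x hx hz2
  have h0_sing : SingularR (0 : A →ₗ[ℂ] ℂ) g := by
    intro p hp _ hp1 _
    obtain ⟨P, _, _, _, ρ, ξ, hξ, rfl⟩ := hp.exists_vec
    have h1 : ∀ a, ρ a ξ = 0 := by
      intro a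
      have := hp1 a
      rw [LinearMap.sub_apply, vecFn_star_mul_self, LinearMap.zero_apply, zero_sub,
        ← Complex.ofReal_neg, Complex.zero_le_real] at this
      have h2 : ‖ρ a ξ‖ ^ 2 = 0 := le_antisymm (by linarith) (by positivity)
      simpa using h2
    ext a
    rw [vecFn_apply, h1]
    simp
  have hkr : IsRepresentable k := vecFn_representable _ _
  have hhr : IsRepresentable h := vecFn_representable _ _
  have hgr : IsRepresentable g := vecFn_representable _ _
  have hfr : IsRepresentable (k + h) := hkr.add hhr
  have hh0 : h = 0 := (huniq (k + h) g hfr hfr.pos hgr hgr.pos k h (k + h) 0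
    ⟨hkr, hkr.pos, hhr, hhr.pos, rfl, hk_ac, hh_sing⟩
    ⟨hfr, hfr.pos, IsRepresentable.zero, IsRepresentable.zero.pos, (add_zero _).symm, hf_ac,
      h0_sing⟩).2
  have hax : ∀ a, π a x = 0 := vecFn_eq_zero π x hh0
  rcases hπ.2 (Submodule.span ℂ {x}) (Submodule.closed_of_finiteDimensional _) (by
    intro a w hw
    obtain ⟨c, rfl⟩ := Submodule.mem_span_singleton.1 hw
    rw [map_smul, hax, smul_zero]
    exact Submodule.zero_mem _) with hs | hs
  · exact hx0 (Submodule.span_singleton_eq_bot.1 hs)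
  · apply hfd
    have : FiniteDimensional ℂ (⊤ : Submodule ℂ H) := by rw [← hs]; infer_instance
    exact Module.finite_def.2 (Submodule.fg_top _ |>.1 (Module.finite_def.1 this))

end Fwd

/-- **Main Theorem (Theorem 1.8 / Theorem 2.21)**: for a `⋆`-algebra `A`, the Lebesgue
decomposition of representable positive functionals over `A` is unique if and only if every
topologically irreducible `⋆`-representation of `A` on a Hilbert space is finite
dimensional. -/
theorem lebesgue_unique_iff_topIrred_finiteDimensional
    (A : Type) [NonUnitalRing A] [Module ℂ A] [SMulCommClass ℂ A A]
    [IsScalarTower ℂ A A] [StarRing A] [StarModule ℂ A] :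
    LebDecompUniqueR A ↔
      ∀ (H : Type) [NormedAddCommGroup H] [InnerProductSpace ℂ H] [CompleteSpace H]
        (π : A →⋆ₙₐ[ℂ] (H →L[ℂ] H)), IsTopIrredRep π → FiniteDimensional ℂ H := by
  constructor
  · intro h H _ _ _ π hπ
    exact finiteDimensional_of_unique h π hπ
  · intro h
    exact unique_of_finiteDimensional h
end

section
/- Let A_M = ∏_{n=1}^∞ M_n(ℂ) be the complete direct product *-algebra of the full matrix algebras. Every *-representation π of A_M on a complex Hilbert space has finite-dimensional range: there is a nonempty finite set F ⊆ ℕ⁺ such that π vanishes on every sequence (a_n)_n with a_n = 0 for all n ∈ F. In particular, every topologically irreducible representation of A_M is finite dimensional, and the Lebesgue decomposition of representable positive functionals over A_M is unique. -/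
open scoped ComplexOrder InnerProductSpace

/-- The complete direct product `⋆`-algebra `A_M = ∏ₙ Mₙ(ℂ)` of all full matrix algebras,
with coordinatewise operations and conjugate-transpose involution. -/
abbrev MatrixProdAlgebra : Type := (n : ℕ+) → Matrix (Fin n) (Fin n) ℂ

lemma part1 {H : Type} [NormedAddCommGroup H] [InnerProductSpace ℂ H] [CompleteSpace H]
    (π : MatrixProdAlgebra →⋆ₙₐ[ℂ] (H →L[ℂ] H)) :
    ∃ F : Finset ℕ+, F.Nonempty ∧
      ∀ a : MatrixProdAlgebra, (∀ n ∈ F, a n = 0) → π a = 0 := by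
  let c : MatrixProdAlgebra := fun n => (((n : ℕ) : ℝ) : ℂ) • 1
  obtain ⟨k, hk⟩ := exists_nat_gt ‖π c‖
  let F : Finset ℕ+ := Finset.Icc 1 (Nat.succPNat k)
  have hF : ∀ n : ℕ+, n ∈ F ↔ (n : ℕ) ≤ k + 1 := by
    intro n
    simp only [F, Finset.mem_Icc, one_le, true_and]
    rw [← PNat.coe_le_coe, Nat.succPNat_coe]
  refine ⟨F, ⟨1, by simp [hF]⟩, fun a ha => ?_⟩
  let p : MatrixProdAlgebra := fun n => if n ∈ F then 0 else 1
  let d : MatrixProdAlgebra := fun n =>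
    if n ∈ F then ((((n : ℕ) : ℝ)) : ℂ) • 1 else ((Real.sqrt (((n : ℕ) : ℝ) ^ 2 - (k : ℝ) ^ 2) : ℝ) : ℂ) • 1
  have hpa : p * a = a := by
    funext n
    by_cases h : n ∈ F
    · simp [p, h, ha n h]
    · simp [p, h]
  have hpp : p * p = p := by
    funext n
    by_cases h : n ∈ F <;> simp [p, h]
  have hps : star p = p := by
    funext n
    by_cases h : n ∈ F <;> simp [p, h]
  have hcd : star c * c = star d * d + (((k : ℝ) : ℂ) ^ 2) • p := by
    funext n
    by_cases h : n ∈ F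
    · simp [c, p, d, h]
    · have h1 : (k : ℝ) ^ 2 ≤ ((n : ℕ) : ℝ) ^ 2 := by
        rw [hF] at h
        have : (k : ℝ) ≤ ((n : ℕ) : ℝ) := by exact_mod_cast (by omega : k ≤ (n : ℕ))
        gcongr
      have h2 : ((Real.sqrt (((n : ℕ) : ℝ) ^ 2 - (k : ℝ) ^ 2) : ℝ) : ℂ) *
          ((Real.sqrt (((n : ℕ) : ℝ) ^ 2 - (k : ℝ) ^ 2) : ℝ) : ℂ) = (n : ℂ) ^ 2 - (k : ℂ) ^ 2 := by
        rw [← Complex.ofReal_mul, Real.mul_self_sqrt (by linarith)]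
        push_cast; rfl
      simp only [Pi.mul_apply, Pi.star_apply, Pi.add_apply, Pi.smul_apply, c, p, d, h, if_false,
        star_smul, star_one, smul_mul_smul_comm, mul_one, RCLike.star_def, Complex.conj_ofReal,
        h2, ← add_smul]
      congr 1
      push_cast
      ring
  have key : ∀ (b : MatrixProdAlgebra) (x : H), ⟪x, π (star b * b) x⟫_ℂ = ((‖π b x‖ ^ 2 : ℝ) : ℂ) := by
    intro b x
    rw [map_mul, map_star, ContinuousLinearMap.star_eq_adjoint, mul_apply_eq_comp,
      ContinuousLinearMap.adjoint_inner_right, inner_self_eq_norm_sq_to_K]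
    push_cast; rfl
  have hle : ∀ x, (k : ℝ) ^ 2 * ‖π p x‖ ^ 2 ≤ ‖π c x‖ ^ 2 := by
    intro x
    have h1 := key c x
    have h2 := key d x
    have h3 := key p x
    rw [hps, hpp] at h3
    rw [hcd, map_add, map_smul, add_apply, inner_add_right, h2,
      smul_apply, inner_smul_right, h3] at h1
    have h4 : ‖π d x‖ ^ 2 + (k : ℝ) ^ 2 * ‖π p x‖ ^ 2 = ‖π c x‖ ^ 2 := by exact_mod_cast h1
    nlinarith [sq_nonneg ‖π d x‖]
  have hp0 : ∀ y, π p y = 0 := by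
    intro y
    have h1 := hle (π p y)
    rw [← mul_apply_eq_comp, ← map_mul, hpp] at h1
    have h2 := (π c).le_opNorm (π p y)
    by_contra hne
    have h3 : 0 < ‖π p y‖ := norm_pos_iff.mpr hne
    have h4 : ‖π c (π p y)‖ < k * ‖π p y‖ := lt_of_le_of_lt h2 (by gcongr)
    have h5 := norm_nonneg (π c (π p y))
    nlinarith
  ext y
  rw [← hpa, map_mul, mul_apply_eq_comp, hp0]; rfl

lemma fin_range {F : Finset ℕ+} {H : Type} [AddCommGroup H] [Module ℂ H]
    (T : MatrixProdAlgebra →ₗ[ℂ] H) (hT : ∀ a, (∀ n ∈ F, a n = 0) → T a = 0) :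
    FiniteDimensional ℂ (LinearMap.range T) := by
  let E : ((n : F) → Matrix (Fin (n : ℕ+)) (Fin (n : ℕ+)) ℂ) →ₗ[ℂ] MatrixProdAlgebra :=
    { toFun := fun b n => if h : n ∈ F then b ⟨n, h⟩ else 0
      map_add' := by
        intro x y; funext n
        by_cases h : n ∈ F <;> simp [h]
      map_smul' := by
        intro x y; funext n
        by_cases h : n ∈ F <;> simp [h] }
  have : LinearMap.range T ≤ LinearMap.range (T ∘ₗ E) := by
    rintro _ ⟨a, rfl⟩
    refine ⟨fun n => a n, ?_⟩
    rw [LinearMap.comp_apply, ← sub_eq_zero, ← map_sub]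
    apply hT
    intro n hn
    simp [E, hn]
  exact Submodule.finiteDimensional_of_le this

lemma part2 {H : Type} [NormedAddCommGroup H] [InnerProductSpace ℂ H] [CompleteSpace H]
    (π : MatrixProdAlgebra →⋆ₙₐ[ℂ] (H →L[ℂ] H)) (hπ : IsTopIrredRep π) :
    FiniteDimensional ℂ H := by
  obtain ⟨hn, hS⟩ := hπ
  obtain ⟨F, -, hF⟩ := part1 π
  obtain ⟨x, hx⟩ := exists_ne (0 : H)
  let T : MatrixProdAlgebra →ₗ[ℂ] H :=
    { toFun := fun a => π a x
      map_add' := by intro a b; simp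
      map_smul' := by intro a b; simp }
  have hfin : FiniteDimensional ℂ (LinearMap.range T) :=
    fin_range (F := F) T (fun a ha => by simp [T, hF a ha])
  have := hS (Submodule.span ℂ {x} ⊔ LinearMap.range T) (Submodule.closed_of_finiteDimensional _) ?_
  · rcases this with h | h
    · exact absurd (by
        have : x ∈ Submodule.span ℂ {x} ⊔ LinearMap.range T :=
          Submodule.mem_sup_left (Submodule.mem_span_singleton_self x)
        rw [h] at this
        simpa using this) hx
    · have h2 : FiniteDimensional ℂ (⊤ : Submodule ℂ H) := by
        rw [← h]; infer_instance
      exact Module.finite_def.mpr ((Submodule.fg_top _).mp (Module.finite_def.mp h2) ) 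
  · intro a y hy
    apply Submodule.mem_sup_right
    obtain ⟨u, hu, v, ⟨b, rfl⟩, rfl⟩ := Submodule.mem_sup.mp hy
    obtain ⟨t, rfl⟩ := Submodule.mem_span_singleton.mp hu
    refine ⟨t • a + a * b, ?_⟩
    simp [T]

/-- GNS-type data of a representable functional on the product algebra. -/
lemma rep_data {f : MatrixProdAlgebra →ₗ[ℂ] ℂ} (hf : IsRepresentable f) :
    ∃ (H : Type) (_ : NormedAddCommGroup H) (_ : InnerProductSpace ℂ H)
      (T : MatrixProdAlgebra →ₗ[ℂ] H) (F : Finset ℕ+),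
      (∀ a b, f (star b * a) = ⟪T b, T a⟫_ℂ) ∧
      (∀ a, (∀ n ∈ F, a n = 0) → T a = 0) ∧
      (∀ a b, T a = 0 → T (b * a) = 0) := by
  obtain ⟨H, i1, i2, i3, π, ξ, -, h⟩ := hf
  obtain ⟨F, -, hF⟩ := part1 π
  refine ⟨H, i1, i2,
    { toFun := fun a => π a ξ
      map_add' := by intro a b; simp
      map_smul' := by intro a b; simp }, F, ?_, ?_, ?_⟩
  · intro a b
    rw [h, map_mul, map_star, ContinuousLinearMap.star_eq_adjoint, mul_apply_eq_comp,
      ContinuousLinearMap.adjoint_inner_right]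
    rfl
  · intro a ha
    simp [hF a ha]
  · intro a b hab
    have : π a ξ = 0 := hab
    simp [this]

lemma bound_of_ker {V H K : Type} [AddCommGroup V] [Module ℂ V] [NormedAddCommGroup H]
    [NormedSpace ℂ H] [NormedAddCommGroup K] [NormedSpace ℂ K] (T : V →ₗ[ℂ] H) (S : V →ₗ[ℂ] K)
    [FiniteDimensional ℂ (LinearMap.range T)]
    (h : ∀ a, T a = 0 → S a = 0) : ∃ C : ℝ, 0 ≤ C ∧ ∀ a, ‖S a‖ ≤ C * ‖T a‖ := by
  let R : LinearMap.range T →ₗ[ℂ] K :=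
    ((LinearMap.ker T).liftQ S (fun a ha => h a ha)) ∘ₗ T.quotKerEquivRange.symm.toLinearMap
  have hR : ∀ a, R ⟨T a, a, rfl⟩ = S a := by
    intro a
    have : T.quotKerEquivRange.symm ⟨T a, a, rfl⟩ = Submodule.Quotient.mk a := by
      rw [LinearEquiv.symm_apply_eq]; rfl
    simp only [R, LinearMap.comp_apply, LinearEquiv.coe_coe, this]
    exact Submodule.liftQ_apply _ _ _
  refine ⟨‖R.toContinuousLinearMap‖, ContinuousLinearMap.opNorm_nonneg _, fun a => ?_⟩
  have := R.toContinuousLinearMap.le_opNorm ⟨T a, a, rfl⟩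
  simpa [hR] using this

lemma exists_vec {F : Finset ℕ+} (L : Submodule ℂ MatrixProdAlgebra)
    (hL : ∀ a b : MatrixProdAlgebra, a ∈ L → b * a ∈ L)
    (hF : ∀ a : MatrixProdAlgebra, (∀ n ∈ F, a n = 0) → a ∈ L) (hne : L ≠ ⊤) :
    ∃ (n : ℕ+) (v : Fin n → ℂ), v ≠ 0 ∧ ∀ a ∈ L, (a n).mulVec v = 0 := by
  classical
  obtain ⟨n, i, r, hr⟩ : ∃ (n : ℕ+) (i : Fin n) (r : Fin n → ℂ),
      (Pi.single n (Matrix.vecMulVec (Pi.single i 1) r) : MatrixProdAlgebra) ∉ L := by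
    by_contra! hcon
    apply hne
    rw [eq_top_iff]
    intro x _
    have h1 : ∀ n : ℕ+, (Pi.single n (x n) : MatrixProdAlgebra) ∈ L := by
      intro n
      have : (Pi.single n (x n) : MatrixProdAlgebra) = ∑ i,
          (Pi.single n (Matrix.vecMulVec (Pi.single i 1) (x n i)) : MatrixProdAlgebra) := by
        have h : x n = ∑ i, Matrix.vecMulVec (Pi.single i 1) (x n i) := by
          ext k l
          simp [Matrix.sum_apply, Matrix.vecMulVec_apply, Pi.single_apply]
        conv_lhs => rw [h]
        exact map_sum (LinearMap.single ℂ (fun n : ℕ+ => Matrix (Fin n) (Fin n) ℂ) n) _ _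
      rw [this]
      exact Submodule.sum_mem _ (fun i _ => hcon n i _)
    have h2 : x - ∑ n ∈ F, (Pi.single n (x n) : MatrixProdAlgebra) ∈ L := by
      apply hF
      intro n hn
      rw [Pi.sub_apply, Finset.sum_apply, Finset.sum_eq_single n]
      · simp
      · intro b _ hb
        simp [Pi.single_eq_of_ne hb.symm]
      · intro h; exact absurd hn h
    have h3 := L.add_mem h2 (Submodule.sum_mem L (t := F) (fun n _ => h1 n))
    simpa using h3
  let φ : (Fin n → ℂ) →ₗ[ℂ] MatrixProdAlgebra :=
    (LinearMap.single ℂ (fun n : ℕ+ => Matrix (Fin n) (Fin n) ℂ) n) ∘ₗ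
      { toFun := fun r => Matrix.vecMulVec (Pi.single i 1) r
        map_add' := fun x y => Matrix.vecMulVec_add _ _ _
        map_smul' := fun c x => Matrix.vecMulVec_smul _ _ _ }
  have hφ : ∀ r, φ r = Pi.single n (Matrix.vecMulVec (Pi.single i 1) r) := fun r => rfl
  have hW : L.comap φ < ⊤ := by
    rw [lt_top_iff_ne_top]
    intro h
    have : r ∈ L.comap φ := by rw [h]; trivial
    exact hr this
  obtain ⟨ψ, hψ, hψW⟩ := Submodule.exists_le_ker_of_lt_top _ hW
  have hsum : ∀ r, ψ r = ∑ j, r j * ψ (Pi.single j 1) := by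
    intro r
    conv_lhs => rw [pi_eq_sum_univ' r]
    simp
  refine ⟨n, fun j => ψ (Pi.single j 1), ?_, ?_⟩
  · intro h
    apply hψ
    ext j
    simpa using congrFun h j
  · intro a ha
    funext k
    have : φ (a n k) ∈ L := by
      have h := hL a (Pi.single n (Matrix.single i k 1)) ha
      convert h using 1
      rw [hφ]
      funext m
      by_cases hm : m = n
      · subst hm
        ext s t
        by_cases hs : s = i
        · subst hs; simp [Matrix.vecMulVec_apply]
        · simp [Matrix.vecMulVec_apply, hs]
      · simp [Pi.single_eq_of_ne hm]
    have h2 : ψ (a n k) = 0 := hψW this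
    rw [hsum] at h2
    simpa [Matrix.mulVec, dotProduct] using h2

lemma vec_rep (n : ℕ+) (w : EuclideanSpace ℂ (Fin n)) (hw : w ≠ 0) :
    ∃ p : MatrixProdAlgebra →ₗ[ℂ] ℂ, IsRepresentable p ∧ p ≠ 0 ∧
      ∀ a, p (star a * a) = ((‖Matrix.toEuclideanCLM (𝕜 := ℂ) (a n) w‖ ^ 2 : ℝ) : ℂ) := by
  let π : MatrixProdAlgebra →⋆ₙₐ[ℂ] (EuclideanSpace ℂ (Fin n) →L[ℂ] EuclideanSpace ℂ (Fin n)) :=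
    { toFun := fun a => Matrix.toEuclideanCLM (𝕜 := ℂ) (a n)
      map_smul' := by intro c a; simp
      map_zero' := by simp
      map_add' := by intro a b; simp
      map_mul' := by intro a b; simp
      map_star' := by intro a; simp [map_star] }
  let p : MatrixProdAlgebra →ₗ[ℂ] ℂ :=
    { toFun := fun a => ⟪w, π a w⟫_ℂ
      map_add' := by intro a b; simp [inner_add_right]
      map_smul' := by intro a b; simp [inner_smul_right] }
  refine ⟨p, ⟨EuclideanSpace ℂ (Fin n), inferInstance, inferInstance, inferInstance, π, w, ?_,
    fun a => rfl⟩, ?_, ?_⟩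
  · apply Function.Surjective.denseRange
    intro y
    obtain ⟨m, hm⟩ : ∃ m, Matrix.toEuclideanCLM (n := Fin n) (𝕜 := ℂ) m = _ := (Matrix.toEuclideanCLM (n := Fin n) (𝕜 := ℂ)).surjective
      (((⟪w, w⟫_ℂ)⁻¹) • (innerSL ℂ w).smulRight y)
    refine ⟨Pi.single n m, ?_⟩
    change Matrix.toEuclideanCLM (𝕜 := ℂ) ((Pi.single n m : MatrixProdAlgebra) n) w = y
    rw [Pi.single_eq_same, hm]
    simp only [smul_apply, ContinuousLinearMap.smulRight_apply,
      innerSL_apply_apply, smul_smul]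
    rw [inv_mul_cancel₀ (by simpa using hw), one_smul]
  · intro h
    have h1 : p 1 = 0 := by rw [h]; rfl
    have h2 : p 1 = ⟪w, w⟫_ℂ := by
      change ⟪w, Matrix.toEuclideanCLM (𝕜 := ℂ) 1 w⟫_ℂ = _
      simp
    rw [h2] at h1
    exact hw (by simpa using h1)
  · intro a
    change ⟪w, π (star a * a) w⟫_ℂ = ((‖π a w‖ ^ 2 : ℝ) : ℂ)
    rw [map_mul, map_star, ContinuousLinearMap.star_eq_adjoint, mul_apply_eq_comp,
      ContinuousLinearMap.adjoint_inner_right, inner_self_eq_norm_sq_to_K]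
    push_cast; rfl

/-- Singular functionals have complementary null ideals. -/
lemma sing_decomp {s g : MatrixProdAlgebra →ₗ[ℂ] ℂ} (hs : IsRepresentable s)
    (hg : IsRepresentable g) (hsg : SingularR s g) (x : MatrixProdAlgebra) :
    ∃ u k, x = u + k ∧ s (star u * u) = 0 ∧ g (star k * k) = 0 := by
  obtain ⟨H₁, _, _, T, F, hT, hTF, hTl⟩ := rep_data hs
  obtain ⟨H₂, _, _, S, G, hS, hSG, hSl⟩ := rep_data hg
  have := fin_range T hTF
  have := fin_range S hSG
  by_cases hL : LinearMap.ker T ⊔ LinearMap.ker S = ⊤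
  · have hx : x ∈ LinearMap.ker T ⊔ LinearMap.ker S := by rw [hL]; trivial
    obtain ⟨u, hu, k, hk, rfl⟩ := Submodule.mem_sup.mp hx
    refine ⟨u, k, rfl, ?_, ?_⟩
    · rw [hT, LinearMap.mem_ker.mp hu, inner_zero_left]
    · rw [hS, LinearMap.mem_ker.mp hk, inner_zero_left]
  · exfalso
    obtain ⟨n, v, hv, hvL⟩ := exists_vec (F := F) _ (by
      intro a b ha
      obtain ⟨u, hu, k, hk, rfl⟩ := Submodule.mem_sup.mp ha
      rw [mul_add]
      exact Submodule.add_mem_sup (hTl u b hu) (hSl k b hk))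
      (fun a ha => Submodule.mem_sup_left (hTF a ha)) hL
    let w : EuclideanSpace ℂ (Fin n) := WithLp.toLp 2 v
    have hw : w ≠ 0 := by
      intro h; apply hv
      simpa [w] using h
    let E : MatrixProdAlgebra →ₗ[ℂ] EuclideanSpace ℂ (Fin n) :=
      { toFun := fun a => Matrix.toEuclideanCLM (𝕜 := ℂ) (a n) w
        map_add' := by intro a b; simp
        map_smul' := by intro a b; simp }
    have hE : ∀ a ∈ LinearMap.ker T ⊔ LinearMap.ker S, E a = 0 := by
      intro a ha
      change Matrix.toEuclideanCLM (𝕜 := ℂ) (a n) (WithLp.toLp 2 v) = 0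
      rw [Matrix.toEuclideanCLM_toLp, hvL a ha]; rfl
    obtain ⟨C, hC0, hC⟩ := bound_of_ker T E (fun a ha => hE a (Submodule.mem_sup_left ha))
    obtain ⟨D, hD0, hD⟩ := bound_of_ker S E (fun a ha => hE a (Submodule.mem_sup_right ha))
    have hM : 0 < C + D + 1 := by positivity
    have hε : (((C + D + 1)⁻¹ : ℝ) : ℂ) ≠ 0 := by
      exact_mod_cast (inv_pos.mpr hM).ne'
    obtain ⟨p, hp, hp0, hpa⟩ := vec_rep n ((((C + D + 1)⁻¹ : ℝ) : ℂ) • w) (smul_ne_zero hε hw)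
    have hpE : ∀ a, p (star a * a) = ((((C + D + 1)⁻¹ * ‖E a‖) ^ 2 : ℝ) : ℂ) := by
      intro a
      rw [hpa, map_smul, norm_smul, Complex.norm_real, Real.norm_of_nonneg (inv_pos.mpr hM).le]
      rfl
    refine hp0 (hsg p hp ?_ ?_ ?_)
    · intro a
      rw [hpE]
      exact Complex.zero_le_real.mpr (sq_nonneg _)
    · intro a
      rw [LinearMap.sub_apply, hpE, hT, inner_self_eq_norm_sq_to_K, sub_nonneg]
      have h1 : (C + D + 1)⁻¹ * ‖E a‖ ≤ ‖T a‖ := by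
        rw [inv_mul_le_iff₀ hM]
        nlinarith [hC a, norm_nonneg (T a)]
      have h2 : ((C + D + 1)⁻¹ * ‖E a‖) ^ 2 ≤ ‖T a‖ ^ 2 := by gcongr
      have h3 := Complex.real_le_real.mpr h2
      simpa using h3
    · intro a
      rw [LinearMap.sub_apply, hpE, hS, inner_self_eq_norm_sq_to_K, sub_nonneg]
      have h1 : (C + D + 1)⁻¹ * ‖E a‖ ≤ ‖S a‖ := by
        rw [inv_mul_le_iff₀ hM]
        nlinarith [hD a, norm_nonneg (S a)]
      have h2 : ((C + D + 1)⁻¹ * ‖E a‖) ^ 2 ≤ ‖S a‖ ^ 2 := by gcongr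
      have h3 := Complex.real_le_real.mpr h2
      simpa using h3

lemma cs_null {s : MatrixProdAlgebra →ₗ[ℂ] ℂ} (hs : IsRepresentable s) {u : MatrixProdAlgebra}
    (hu : s (star u * u) = 0) (b : MatrixProdAlgebra) : s (star b * u) = 0 := by
  obtain ⟨H₁, _, _, T, F, hT, hTF, hTl⟩ := rep_data hs
  rw [hT, inner_self_eq_zero] at hu
  rw [hT, hu, inner_zero_right]

lemma herm {s : MatrixProdAlgebra →ₗ[ℂ] ℂ} (hs : IsRepresentable s)
    (a b : MatrixProdAlgebra) : s (star b * a) = star (s (star a * b)) := by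
  obtain ⟨H₁, _, _, T, F, hT, hTF, hTl⟩ := rep_data hs
  rw [hT, hT]
  exact (inner_conj_symm _ _).symm

lemma ac_null {r g : MatrixProdAlgebra →ₗ[ℂ] ℂ} (h : AbsContR r g) {u : MatrixProdAlgebra}
    (hu : g (star u * u) = 0) : r (star u * u) = 0 := by
  obtain ⟨fn, α, h1, h2, h3, h4, h5⟩ := h
  have h0 : ∀ n, fn n (star u * u) = 0 := by
    intro n
    have ha := (h1 n).2 u
    have hb := h4 n u
    rw [LinearMap.sub_apply, LinearMap.smul_apply, hu, smul_zero, zero_sub, neg_nonneg] at hb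
    exact le_antisymm hb ha
  have := h5 (star u * u)
  simp only [h0] at this
  exact tendsto_nhds_unique this tendsto_const_nhds

lemma part3 : LebDecompUniqueR MatrixProdAlgebra := by
  intro f g hf _ hg _ r s r' s' ⟨hr, _, hs, _, e, hac, hsi⟩ ⟨hr', _, hs', _, e', hac', hsi'⟩
  have hK : ∀ k b, g (star k * k) = 0 → s (star b * k) = s' (star b * k) := by
    intro k b hk
    have h1 := cs_null hr (ac_null hac hk) b
    have h2 := cs_null hr' (ac_null hac' hk) b
    have h3 : (r + s) (star b * k) = (r' + s') (star b * k) := by rw [← e, ← e']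
    simpa [h1, h2] using h3
  have hN : ∀ x, s (star x * x) = 0 → ∀ b, s' (star b * x) = 0 := by
    intro x hx b
    obtain ⟨u, k, rfl, hu, hk⟩ := sing_decomp hs' hg hsi' b
    rw [star_add, add_mul, map_add, herm hs' x u, cs_null hs' hu, herm hs' x k, ← hK k x hk,
      ← herm hs x k, cs_null hs hx]
    simp
  have hss : s = s' := by
    ext x
    obtain ⟨u, k, rfl, hu, hk⟩ := sing_decomp hs hg hsi x
    have h1 := cs_null hs hu 1
    have h2 := hN u hu 1
    have h3 := hK k 1 hk
    rw [star_one, one_mul] at h1 h2 h3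
    rw [map_add, map_add, h1, h2, h3]
  refine ⟨?_, hss⟩
  have : r + s = r' + s' := by rw [← e, ← e']
  rw [hss] at this
  exact add_right_cancel this

/-- **Example 3.3**: every `⋆`-representation of `A_M = ∏ₙ Mₙ(ℂ)` on a Hilbert space kills
all coordinates outside some nonempty finite set `F ⊆ ℕ⁺`; in particular every topologically
irreducible representation of `A_M` is finite dimensional, and the Lebesgue decomposition of
representable positive functionals over `A_M` is unique. -/
theorem matrixProdAlgebra_representations
    : (∀ (H : Type) [NormedAddCommGroup H] [InnerProductSpace ℂ H] [CompleteSpace H]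
        (π : MatrixProdAlgebra →⋆ₙₐ[ℂ] (H →L[ℂ] H)),
        ∃ F : Finset ℕ+, F.Nonempty ∧
          ∀ a : MatrixProdAlgebra, (∀ n ∈ F, a n = 0) → π a = 0) ∧
      (∀ (H : Type) [NormedAddCommGroup H] [InnerProductSpace ℂ H] [CompleteSpace H]
        (π : MatrixProdAlgebra →⋆ₙₐ[ℂ] (H →L[ℂ] H)),
        IsTopIrredRep π → FiniteDimensional ℂ H) ∧
      LebDecompUniqueR MatrixProdAlgebra := by
  exact ⟨fun H _ _ _ π => part1 π, fun H _ _ _ π hπ => part2 π hπ, part3⟩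
end
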